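/- Let Λ = ω₁ℤ + ω₂ℤ with ω₁ > 0 real, Im ω₂ > 0, and ω₁·Im ω₂ = π/2. There exists a constant K > 1, depending only on Λ, with the following property: for every integer N ≥ 1, if ζ₁, …, ζ_N ∈ ℂ is a complete set of representatives of the cosets of Λ in the superlattice Λ_N generated by (⌊√N⌋ω₁ + ω₂)/N and (−(N−⌊√N⌋²)ω₁ + ⌊√N⌋ω₂)/N, then for every real β ≥ 0 one has 1 ≤ (2/π) ∫_D exp(β Σ_{j=1}^{N} U_{ℂ/Λ}(z, ζ_j)) dA(z) ≤ K^β, where D is a fundamental domain of Λ. -/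

import Mathlib

open MeasureTheory

/-- The lattice `Λ = ω₁ℤ + ω₂ℤ` as a subset of `ℂ`. -/
def latticeSet (ω₁ ω₂ : ℂ) : Set ℂ :=
  {w : ℂ | ∃ m n : ℤ, w = (m : ℂ) * ω₁ + (n : ℂ) * ω₂}

/-- The Weierstrass sigma function of the lattice `ω₁ℤ + ω₂ℤ`. -/
noncomputable def wSigma (ω₁ ω₂ : ℂ) (z : ℂ) : ℂ :=
  z * ∏' p : {p : ℤ × ℤ // p ≠ 0},
      (1 - z / ((p.1.1 : ℂ) * ω₁ + (p.1.2 : ℂ) * ω₂)) *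
        Complex.exp (z / ((p.1.1 : ℂ) * ω₁ + (p.1.2 : ℂ) * ω₂) +
          z ^ 2 / (2 * ((p.1.1 : ℂ) * ω₁ + (p.1.2 : ℂ) * ω₂) ^ 2))

/-- The Weierstrass zeta function `ζ = σ'/σ`. -/
noncomputable def wZeta (ω₁ ω₂ : ℂ) (z : ℂ) : ℂ :=
  deriv (wSigma ω₁ ω₂) z / wSigma ω₁ ω₂ z

/-- The quasi-period `λ₁ = 2ζ(ω₁/2)`. -/
noncomputable def lambda1 (ω₁ ω₂ : ℂ) : ℂ := 2 * wZeta ω₁ ω₂ (ω₁ / 2)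

/-- The constant `b = 1 − λ₁/(2ω₁)`. -/
noncomputable def bconst (ω₁ ω₂ : ℂ) : ℂ := 1 - lambda1 ω₁ ω₂ / (2 * ω₁)

/-- The modified Weierstrass sigma function `σ_*(z) = e^{b z²} σ(z)`. -/
noncomputable def sigmaStar (ω₁ ω₂ : ℂ) (z : ℂ) : ℂ :=
  Complex.exp (bconst ω₁ ω₂ * z ^ 2) * wSigma ω₁ ω₂ z

/-- A fundamental domain of the lattice `ω₁ℤ + ω₂ℤ`. -/
def fundDomain (ω₁ ω₂ : ℂ) : Set ℂ :=
  (fun p : ℝ × ℝ => (p.1 : ℂ) * ω₁ + (p.2 : ℂ) * ω₂) ''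
    (Set.Ico (0 : ℝ) 1 ×ˢ Set.Ico (0 : ℝ) 1)

/-- The normalizing constant `A_Λ`. -/
noncomputable def Aconst (ω₁ ω₂ : ℂ) : ℝ :=
  2 / Real.pi * ∫ z in fundDomain ω₁ ω₂, (Real.log ‖sigmaStar ω₁ ω₂ z‖ - ‖z‖ ^ 2)

/-- The unipolar Green function of the torus `ℂ/Λ`. -/
noncomputable def Utorus (ω₁ ω₂ : ℂ) (z w : ℂ) : ℝ :=
  Real.log ‖sigmaStar ω₁ ω₂ (z - w)‖ - ‖z - w‖ ^ 2 - Aconst ω₁ ω₂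

/-- The monic first degree pseudopolynomial on the torus with root `α`. -/
noncomputable def pseudoPoly (ω₁ ω₂ : ℂ) (α z : ℂ) : ℂ :=
  Complex.exp (2 * Complex.I * ((((starRingEnd ℂ) α) * z).im : ℂ)) *
    (Complex.exp (-((‖z - α‖ ^ 2 : ℝ) : ℂ)) * sigmaStar ω₁ ω₂ (z - α))

/-
The sum `F = ∑ⱼ U(·, ζⱼ)` has mean zero over the torus, so `exp x ≥ 1 + x` gives the lower bound,
and the upper bound follows from a bound on `F` independent of `N`. By `Λ`-periodicity, `exp F`
attains its maximum at some `z₀`; since `F + N |· - z₀|²` is subharmonic, the mean of `F` over the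
disc of radius `r ≍ N^(-1/2)` about `z₀` is at least `F z₀ - N r²`. Such a disc contains a
fundamental cell of `Λ_N`, whose area is `π / (2N)`. The translates of the cell by the `ζⱼ` tile the
torus, so `F` has mean zero on the cell, and it is at most `F z₀` on the rest of the disc; this
forces `F z₀ ≤ 2 N² r⁴ = O(1)`.

Periodicity of `U` needs the quasi-periods of `σ`. Multiplying out `σ²` row by row along `ω₁`
yields, by Euler's product for the sine, a theta product times `exp (G₂(τ) z² / ω₁²)`; squaring
makes the pairing of `ω` with `-ω` available, so no choice of signs enters.
-/

open Filter Topology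

/-- Weierstrass' elementary factor of genus one, `E₁(x) = (1 - x) exp x`. -/
noncomputable def elementaryFactorOne (x : ℂ) : ℂ := (1 - x) * Complex.exp x

/-- Weierstrass' elementary factor of genus two, `E₂(x) = (1 - x) exp(x + x² / 2)`. -/
noncomputable def elementaryFactorTwo (x : ℂ) : ℂ := (1 - x) * Complex.exp (x + x ^ 2 / 2)

section CanonicalProduct

lemma elementaryFactorTwo_zero : elementaryFactorTwo 0 = 1 := by simp [elementaryFactorTwo]

lemma elementaryFactorTwo_ne_zero {x : ℂ} (hx : x ≠ 1) : elementaryFactorTwo x ≠ 0 :=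
  mul_ne_zero (sub_ne_zero.mpr hx.symm) (Complex.exp_ne_zero _)

lemma elementaryFactorTwo_mul_neg (x : ℂ) :
    elementaryFactorTwo x * elementaryFactorTwo (-x) = elementaryFactorOne (x ^ 2) := by
  rw [elementaryFactorTwo, elementaryFactorTwo, mul_mul_mul_comm, ← Complex.exp_add,
    elementaryFactorOne]
  ring_nf

lemma norm_elementaryFactorTwo_sub_one_le {x : ℂ} (hx : ‖x‖ ≤ 1 / 2) :
    ‖elementaryFactorTwo x - 1‖ ≤ 2 * ‖x‖ ^ 3 := by
  set y := x + x ^ 2 / 2 with hy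
  have hyx : ‖y‖ ≤ 5 / 4 * ‖x‖ := by
    have : ‖y‖ ≤ ‖x‖ + ‖x‖ ^ 2 / 2 := (norm_add_le _ _).trans (by simp)
    nlinarith [norm_nonneg x]
  have taylor : ‖Complex.exp y - (1 + y + y ^ 2 / 2)‖ ≤ ‖y‖ ^ 3 * (2 / 9) := by
    have := Complex.exp_bound (x := y) (by linarith) (n := 3) (by norm_num)
    norm_num [Finset.sum_range_succ, Nat.factorial] at this
    exact this
  have decomposition : elementaryFactorTwo x - 1 =
      (1 - x) * (Complex.exp y - (1 + y + y ^ 2 / 2)) + (x ^ 4 / 8 - x * y ^ 2 / 2) := by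
    simp only [elementaryFactorTwo, hy]
    ring
  have remainder : ‖(1 - x) * (Complex.exp y - (1 + y + y ^ 2 / 2))‖ ≤
      3 / 2 * ((5 / 4 * ‖x‖) ^ 3 * (2 / 9)) := by
    have : ‖1 - x‖ ≤ 3 / 2 := (norm_sub_le _ _).trans (by rw [norm_one]; linarith)
    rw [norm_mul]
    exact mul_le_mul this (taylor.trans (by gcongr)) (norm_nonneg _) (by norm_num)
  have polynomial : ‖x ^ 4 / 8 - x * y ^ 2 / 2‖ ≤
      ‖x‖ ^ 3 * (1 / 2) / 8 + ‖x‖ * (5 / 4 * ‖x‖) ^ 2 / 2 := by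
    calc ‖x ^ 4 / 8 - x * y ^ 2 / 2‖ ≤ ‖x‖ ^ 3 * ‖x‖ / 8 + ‖x‖ * ‖y‖ ^ 2 / 2 :=
          (norm_sub_le _ _).trans (by simp [pow_succ])
      _ ≤ _ := by gcongr
  rw [decomposition]
  refine (norm_add_le _ _).trans ((add_le_add remainder polynomial).trans ?_)
  nlinarith [pow_nonneg (norm_nonneg x) 3]

variable {ι : Type*} {a : ι → ℂ}

lemma eventually_norm_elementaryFactorTwo_sub_one_le (ha : Summable fun i => ‖a i‖⁻¹ ^ 3)
    {R : ℝ} (hR : 0 < R) : ∀ᶠ i in cofinite, ∀ z ∈ Metric.ball (0 : ℂ) R,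
      ‖elementaryFactorTwo (z / a i) - 1‖ ≤ 2 * R ^ 3 * ‖a i‖⁻¹ ^ 3 := by
  have small := ha.tendsto_cofinite_zero.eventually_lt_const
    (show 0 < ((2 * R)⁻¹) ^ 3 by positivity)
  filter_upwards [small] with i hi z hz
  have hz : ‖z‖ < R := by simpa using hz
  have hai : ‖a i‖⁻¹ < (2 * R)⁻¹ := lt_of_pow_lt_pow_left₀ 3 (by positivity) hi
  have hquot : ‖z / a i‖ ≤ R * ‖a i‖⁻¹ := by
    rw [norm_div, div_eq_mul_inv]
    gcongr
  have hhalf : R * ‖a i‖⁻¹ ≤ 1 / 2 :=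
    (mul_le_mul_of_nonneg_left hai.le hR.le).trans_eq (by field_simp)
  calc ‖elementaryFactorTwo (z / a i) - 1‖ ≤ 2 * ‖z / a i‖ ^ 3 :=
        norm_elementaryFactorTwo_sub_one_le (hquot.trans hhalf)
    _ ≤ 2 * (R * ‖a i‖⁻¹) ^ 3 := by gcongr
    _ = 2 * R ^ 3 * ‖a i‖⁻¹ ^ 3 := by ring

lemma summable_norm_elementaryFactorTwo_sub_one (ha : Summable fun i => ‖a i‖⁻¹ ^ 3) (z : ℂ) :
    Summable fun i => ‖elementaryFactorTwo (z / a i) - 1‖ := by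
  have hR : 0 < ‖z‖ + 1 := by positivity
  refine (ha.mul_left (2 * (‖z‖ + 1) ^ 3)).of_norm_bounded_eventually ?_
  filter_upwards [eventually_norm_elementaryFactorTwo_sub_one_le ha hR] with i hi
  rw [norm_norm]
  exact hi z (by simp)

lemma multipliable_elementaryFactorTwo (ha : Summable fun i => ‖a i‖⁻¹ ^ 3) (z : ℂ) :
    Multipliable fun i => elementaryFactorTwo (z / a i) := by
  simpa using multipliable_one_add_of_summable (summable_norm_elementaryFactorTwo_sub_one ha z)

lemma hasProd_elementaryFactorOne_sq (ha : Summable fun i => ‖a i‖⁻¹ ^ 3) (z : ℂ) :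
    HasProd (fun i => elementaryFactorOne ((z / a i) ^ 2))
      ((∏' i, elementaryFactorTwo (z / a i)) * ∏' i, elementaryFactorTwo (-z / a i)) := by
  simpa only [neg_div, elementaryFactorTwo_mul_neg] using
    (multipliable_elementaryFactorTwo ha z).hasProd.mul
      (multipliable_elementaryFactorTwo ha (-z)).hasProd

lemma tprod_elementaryFactorTwo_ne_zero (ha : Summable fun i => ‖a i‖⁻¹ ^ 3) {z : ℂ}
    (hz : ∀ i, z / a i ≠ 1) : ∏' i, elementaryFactorTwo (z / a i) ≠ 0 := by
  simpa using tprod_one_add_ne_zero_of_summable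
    (f := fun i => elementaryFactorTwo (z / a i) - 1)
    (fun i => by simpa using elementaryFactorTwo_ne_zero (hz i))
    (summable_norm_elementaryFactorTwo_sub_one ha z)

lemma differentiable_tprod_elementaryFactorTwo (ha : Summable fun i => ‖a i‖⁻¹ ^ 3) :
    Differentiable ℂ fun z => ∏' i, elementaryFactorTwo (z / a i) := by
  intro z
  have hR : 0 < ‖z‖ + 1 := by positivity
  have factor : ∀ i, Differentiable ℂ fun z => elementaryFactorTwo (z / a i) - 1 := by
    intro i
    unfold elementaryFactorTwo
    fun_prop
  have product := Summable.hasProdLocallyUniformlyOn_one_add (K := Metric.ball (0 : ℂ) (‖z‖ + 1))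
    Metric.isOpen_ball (ha.mul_left (2 * (‖z‖ + 1) ^ 3))
    (eventually_norm_elementaryFactorTwo_sub_one_le ha hR)
    (fun i => (factor i).continuous.continuousOn)
  have holomorphic := product.differentiableOn (Eventually.of_forall fun s =>
    (Differentiable.fun_finsetProd (u := s) fun i _ => (factor i).const_add 1).differentiableOn)
    Metric.isOpen_ball
  simpa using holomorphic.differentiableAt (Metric.isOpen_ball.mem_nhds (by simp))

end CanonicalProduct

section Sigma

variable (L : PeriodPair)

lemma summable_inv_norm_pow_three_lattice : Summable fun l : L.lattice => ‖(l : ℂ)‖⁻¹ ^ 3 := by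
  simpa [inv_pow] using ZLattice.summable_norm_pow_inv L.lattice 3 (by simp)

lemma latticeSet_eq_lattice : latticeSet L.ω₁ L.ω₂ = L.lattice := by
  ext x
  simp only [latticeSet, Set.mem_ofPred_eq, SetLike.mem_coe, PeriodPair.mem_lattice, eq_comm]

lemma wSigma_eq_mul_tprod (z : ℂ) :
    wSigma L.ω₁ L.ω₂ z = z * ∏' l : L.lattice, elementaryFactorTwo (z / l) := by
  rw [wSigma, ← L.latticeEquivProd.symm.toEquiv.tprod_eq,
    ← tprod_subtype_eq_of_mulSupport_subset (s := {p : ℤ × ℤ | p ≠ 0})]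
  · congr 1
    refine tprod_congr fun p => ?_
    simp only [LinearEquiv.coe_toEquiv, PeriodPair.latticeEquiv_symm_apply, elementaryFactorTwo,
      div_pow, div_div, mul_comm (2 : ℂ)]
  · rintro p hp rfl
    simp [elementaryFactorTwo_zero] at hp

lemma differentiable_wSigma : Differentiable ℂ (wSigma L.ω₁ L.ω₂) := by
  rw [funext (wSigma_eq_mul_tprod L)]
  exact differentiable_id.mul
    (differentiable_tprod_elementaryFactorTwo (summable_inv_norm_pow_three_lattice L))

variable {L} in
lemma wSigma_ne_zero {z : ℂ} (hz : z ∉ L.lattice) : wSigma L.ω₁ L.ω₂ z ≠ 0 := by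
  rw [wSigma_eq_mul_tprod]
  refine mul_ne_zero (by rintro rfl; exact hz L.lattice.zero_mem)
    (tprod_elementaryFactorTwo_ne_zero (summable_inv_norm_pow_three_lattice L) fun l hl => hz ?_)
  rw [eq_of_div_eq_one hl]
  exact l.2

lemma wSigma_zero : wSigma L.ω₁ L.ω₂ 0 = 0 := by simp [wSigma]

lemma wSigma_neg (z : ℂ) : wSigma L.ω₁ L.ω₂ (-z) = -wSigma L.ω₁ L.ω₂ z := by
  rw [wSigma_eq_mul_tprod, wSigma_eq_mul_tprod, ← (Equiv.neg L.lattice).tprod_eq, neg_mul]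
  simp

lemma wSigma_sq_eq_mul_tprod (z : ℂ) : wSigma L.ω₁ L.ω₂ z ^ 2 =
    z ^ 2 * ∏' l : L.lattice, elementaryFactorOne ((z / l) ^ 2) := by
  rw [(hasProd_elementaryFactorOne_sq (summable_inv_norm_pow_three_lattice L) z).tprod_eq,
    eq_neg_iff_add_eq_zero.mpr (show wSigma L.ω₁ L.ω₂ z ^ 2 +
      wSigma L.ω₁ L.ω₂ z * wSigma L.ω₁ L.ω₂ (-z) = 0 by rw [wSigma_neg]; ring),
    wSigma_eq_mul_tprod, wSigma_eq_mul_tprod]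
  ring

end Sigma

open scoped UpperHalfPlane

section SineProduct

open Complex

lemma prod_Icc_neg_natCast {M : Type*} [CommMonoid M] (f : ℤ → M) (n : ℕ) :
    ∏ m ∈ Finset.Icc (-n : ℤ) n, f m =
      f 0 * ∏ j ∈ Finset.range n, (f (j + 1) * f (-(j + 1))) := by
  induction n with
  | zero => simp
  | succ n ih =>
    have split : Finset.Icc (-((n + 1 : ℕ) : ℤ)) (n + 1 : ℕ) =
        insert ((n : ℤ) + 1) (insert (-((n : ℤ) + 1)) (Finset.Icc (-n : ℤ) n)) := by
      grind
    rw [split, Finset.prod_insert (by grind), Finset.prod_insert (by grind), ih,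
      Finset.prod_range_succ, ← mul_assoc, mul_comm _ (f 0 * _), mul_assoc]

lemma tendsto_prod_one_sub_div_sq (x : ℂ) :
    Tendsto (fun M : ℕ => x ^ 2 * ∏ m ∈ Finset.Icc (-M : ℤ) M, (1 - (x / m) ^ 2)) atTop
      (𝓝 ((sin (Real.pi * x) / Real.pi) ^ 2)) := by
  refine (((tendsto_euler_sin_prod x).div_const (Real.pi : ℂ)).pow 2).congr fun M => ?_
  have hπ : (Real.pi : ℂ) ≠ 0 := ofReal_ne_zero.mpr Real.pi_ne_zero
  have pairs : ∏ m ∈ Finset.Icc (-M : ℤ) M, (1 - (x / m) ^ 2) =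
      (∏ j ∈ Finset.range M, (1 - x ^ 2 / ((j : ℂ) + 1) ^ 2)) ^ 2 := by
    rw [prod_Icc_neg_natCast, sq (∏ j ∈ _, _), ← Finset.prod_mul_distrib]
    push_cast
    simp only [div_neg, neg_sq, div_pow, div_zero, zero_pow two_ne_zero, sub_zero, one_mul]
  rw [pairs, mul_assoc, mul_div_cancel_left₀ _ hπ, mul_pow]

lemma tendsto_prod_one_sub_div_add_sq {α : ℂ} (hα : α ∈ integerComplement)
    (x : ℂ) :
    Tendsto (fun M : ℕ => ∏ m ∈ Finset.Icc (-M : ℤ) M, (1 - (x / (α + m)) ^ 2)) atTop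
      (𝓝 (sin (Real.pi * (α - x)) * sin (Real.pi * (α + x)) / sin (Real.pi * α) ^ 2)) := by
  have limit := ((tendsto_euler_sin_prod (α - x)).mul (tendsto_euler_sin_prod (α + x))).div
    ((tendsto_euler_sin_prod α).pow 2) (pow_ne_zero 2 (sin_pi_mul_ne_zero hα))
  refine limit.congr fun M => ?_
  have hπ : (Real.pi : ℂ) ≠ 0 := ofReal_ne_zero.mpr Real.pi_ne_zero
  have hα0 : α ≠ 0 := integerComplement.ne_zero hα
  have pair (j : ℕ) : (1 - (x / (α + (j + 1))) ^ 2) * (1 - (x / (α + -(j + 1))) ^ 2) =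
      (1 - (α - x) ^ 2 / ((j : ℂ) + 1) ^ 2) * (1 - (α + x) ^ 2 / ((j : ℂ) + 1) ^ 2) /
        (1 - α ^ 2 / ((j : ℂ) + 1) ^ 2) ^ 2 := by
    have hj : (j : ℂ) + 1 ≠ 0 := Nat.cast_add_one_ne_zero j
    have h₁ : α + (j + 1) ≠ 0 := by simpa using integerComplement_add_ne_zero hα (j + 1)
    have h₂ : α + -(j + 1) ≠ 0 := by simpa using integerComplement_add_ne_zero hα (-(j + 1))
    have h₃ : ((j : ℂ) + 1) ^ 2 - α ^ 2 ≠ 0 := by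
      rw [show ((j : ℂ) + 1) ^ 2 - α ^ 2 = -((α + (j + 1)) * (α + -(j + 1))) by ring]
      exact neg_ne_zero.mpr (mul_ne_zero h₁ h₂)
    field_simp
    ring
  rw [prod_Icc_neg_natCast]
  push_cast
  simp only [pair, Finset.prod_div_distrib, Finset.prod_mul_distrib, Finset.prod_pow, add_zero,
    Pi.div_apply, mul_pow]
  rw [div_pow, one_sub_div (pow_ne_zero 2 hα0), sq_sub_sq]
  simp only [div_eq_mul_inv, mul_inv]
  field_simp

lemma sin_pi_mul_eq_exp (x : ℂ) :
    sin (Real.pi * x) = I / 2 * exp (-(Real.pi * I * x)) * (1 - exp (2 * Real.pi * I * x)) := by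
  rw [sin, mul_sub, mul_assoc _ (exp _) (exp _), ← exp_add]
  ring_nf

lemma sin_mul_sin_div_sin_sq_eq (α x : ℂ) :
    sin (Real.pi * (α - x)) * sin (Real.pi * (α + x)) / sin (Real.pi * α) ^ 2 =
      (1 - exp (2 * Real.pi * I * α) * (exp (2 * Real.pi * I * x))⁻¹) *
        (1 - exp (2 * Real.pi * I * α) * exp (2 * Real.pi * I * x)) /
          (1 - exp (2 * Real.pi * I * α)) ^ 2 := by
  simp only [sin_pi_mul_eq_exp, mul_sub (2 * Real.pi * I), mul_add (2 * Real.pi * I), exp_sub,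
    exp_add, mul_sub (Real.pi * I), mul_add (Real.pi * I), exp_neg, ← div_eq_mul_inv, mul_pow]
  have := exp_ne_zero (Real.pi * I * α)
  have := exp_ne_zero (Real.pi * I * x)
  have hI := I_ne_zero
  by_cases h : 1 - exp (2 * Real.pi * I * α) = 0
  · simp [h]
  field_simp

lemma sin_pi_mul_sq_eq (x : ℂ) : sin (Real.pi * x) ^ 2 =
    -(1 / 4) * (exp (2 * Real.pi * I * x))⁻¹ * (1 - exp (2 * Real.pi * I * x)) ^ 2 := by
  rw [sin_pi_mul_eq_exp, mul_pow, mul_pow, ← exp_nat_mul, ← exp_neg, div_pow, I_sq]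
  ring_nf

end SineProduct

section Theta

/-- The `q`-Pochhammer symbol `(w; q)_∞ = ∏_{n ≥ 0} (1 - qⁿ w)`. -/
noncomputable def qPochhammerInf (q w : ℂ) : ℂ := ∏' n : ℕ, (1 - q ^ n * w)

/-- Jacobi's theta product `(w; q)_∞ (q / w; q)_∞`, which vanishes exactly at the powers of `q`. -/
noncomputable def thetaProduct (q w : ℂ) : ℂ := qPochhammerInf q w * qPochhammerInf q (q * w⁻¹)

variable {q : ℂ}

lemma summable_norm_neg_pow_mul (hq : ‖q‖ < 1) (w : ℂ) : Summable fun n : ℕ => ‖-(q ^ n * w)‖ := by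
  simpa [norm_pow] using (summable_geometric_of_lt_one (norm_nonneg q) hq).mul_right ‖w‖

lemma multipliable_one_sub_pow_mul (hq : ‖q‖ < 1) (w : ℂ) :
    Multipliable fun n : ℕ => 1 - q ^ n * w := by
  simpa [sub_eq_add_neg] using multipliable_one_add_of_summable (summable_norm_neg_pow_mul hq w)

lemma qPochhammerInf_eq_mul (hq : ‖q‖ < 1) (w : ℂ) :
    qPochhammerInf q w = (1 - w) * qPochhammerInf q (q * w) := by
  have tail : (fun n : ℕ => 1 - q ^ (n + 1) * w) = fun n => 1 - q ^ n * (q * w) := by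
    ext n
    ring
  rw [qPochhammerInf, tprod_eq_zero_mul' (by rw [tail]; exact multipliable_one_sub_pow_mul hq _),
    tail, qPochhammerInf, pow_zero, one_mul]

lemma qPochhammerInf_ne_zero (hq : ‖q‖ < 1) {w : ℂ} (hw : ‖w‖ < 1) : qPochhammerInf q w ≠ 0 := by
  have factor (n : ℕ) : 1 + -(q ^ n * w) ≠ 0 := by
    rw [← sub_eq_add_neg, sub_ne_zero]
    refine ne_of_apply_ne norm (ne_of_gt ?_)
    rw [norm_one, norm_mul, norm_pow]
    exact (mul_le_of_le_one_left (norm_nonneg w) (pow_le_one₀ (norm_nonneg q) hq.le)).trans_lt hw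
  simpa [qPochhammerInf, sub_eq_add_neg] using
    tprod_one_add_ne_zero_of_summable factor (summable_norm_neg_pow_mul hq w)

lemma thetaProduct_mul_left (hq : ‖q‖ < 1) (hq0 : q ≠ 0) {w : ℂ} (hw : w ≠ 0) :
    thetaProduct q (q * w) = -w⁻¹ * thetaProduct q w := by
  rw [thetaProduct, thetaProduct, qPochhammerInf_eq_mul hq w,
    mul_inv, mul_inv_cancel_left₀ hq0, qPochhammerInf_eq_mul hq w⁻¹]
  linear_combination -(qPochhammerInf q (q * w) * qPochhammerInf q (q * w⁻¹)) * mul_inv_cancel₀ hw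

lemma tendsto_prod_theta_factors (hq : ‖q‖ < 1) (w : ℂ) :
    Tendsto (fun M : ℕ => w⁻¹ * (1 - w) ^ 2 * ∏ k ∈ Finset.range M,
      ((1 - q ^ (k + 1) * w⁻¹) * (1 - q ^ (k + 1) * w) / (1 - q ^ (k + 1)) ^ 2) ^ 2) atTop
      (𝓝 (w⁻¹ * thetaProduct q w ^ 2 / qPochhammerInf q q ^ 4)) := by
  have factors (w : ℂ) : Tendsto (fun M : ℕ => ∏ k ∈ Finset.range M, (1 - q ^ k * (q * w))) atTop
      (𝓝 (qPochhammerInf q (q * w))) :=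
    (multipliable_one_sub_pow_mul hq (q * w)).hasProd.tendsto_prod_nat
  have limit := (((factors w⁻¹).mul (factors w)).div ((factors 1).pow 2)
    (pow_ne_zero 2 (qPochhammerInf_ne_zero hq (by simpa using hq)))).pow 2
  convert limit.const_mul (w⁻¹ * (1 - w) ^ 2) using 1
  · simp only [← Finset.prod_mul_distrib, ← Finset.prod_pow, ← Finset.prod_div_distrib,
      Pi.div_apply]
    ring_nf
  · rw [thetaProduct, qPochhammerInf_eq_mul hq w]
    ring_nf

end Theta

section SigmaTheta

open Complex EisensteinSeries

/-- The factor `∏ₘ E₁((ξ / (nτ + m))²)` contributed by the `n`-th row of the lattice `ℤτ + ℤ` to the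
square of its sigma function at `ξ`. -/
noncomputable def rowProduct (τ : ℍ) (ξ : ℂ) (n : ℤ) : ℂ :=
  ∏' m : ℤ, elementaryFactorOne ((ξ / (n * τ + m)) ^ 2)

variable (τ : ℍ) (ξ : ℂ)

lemma hasProd_rowProduct (n : ℤ) :
    HasProd (fun m : ℤ => elementaryFactorOne ((ξ / (n * τ + m)) ^ 2)) (rowProduct τ ξ n) :=
  (hasProd_elementaryFactorOne_sq (by simpa using (linear_right_summable (τ : ℂ) n
    (k := 3) (by norm_num)).norm) ξ).multipliable.hasProd

lemma rowProduct_neg (n : ℤ) : rowProduct τ ξ (-n) = rowProduct τ ξ n := by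
  rw [rowProduct, rowProduct, ← (Equiv.neg ℤ).tprod_eq]
  refine tprod_congr fun m => ?_
  rw [Equiv.neg_apply, Int.cast_neg, Int.cast_neg, neg_mul, ← neg_add, div_neg, neg_sq]

variable {τ ξ} in
lemma rowProduct_eq_of_tendsto {n : ℤ} {x : ℂ}
    (hx : Tendsto (fun M : ℕ => ∏ m ∈ Finset.Icc (-M : ℤ) M, (1 - (ξ / (n * τ + m)) ^ 2))
      atTop (𝓝 x)) : rowProduct τ ξ n = x * exp (ξ ^ 2 * e2Summand n τ) := by
  refine tendsto_nhds_unique ((hasProd_rowProduct τ ξ n).comp Finset.tendsto_Icc_neg) ?_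
  have exponent := ((e2Summand_summable n τ).hasSum.comp Finset.tendsto_Icc_neg).const_mul (ξ ^ 2)
  refine (hx.mul exponent.cexp).congr fun M => ?_
  simp only [Function.comp_apply, elementaryFactorOne, Finset.prod_mul_distrib, ← exp_sum,
    Finset.mul_sum, eisSummand, zpow_neg, Matrix.cons_val_zero, Matrix.cons_val_one, mul_pow,
    inv_pow, div_eq_mul_inv]
  norm_cast

lemma rowProduct_of_ne_zero {n : ℤ} (hn : n ≠ 0) : rowProduct τ ξ n =
    (1 - exp (2 * Real.pi * I * (n * τ)) * (exp (2 * Real.pi * I * ξ))⁻¹) *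
      (1 - exp (2 * Real.pi * I * (n * τ)) * exp (2 * Real.pi * I * ξ)) /
        (1 - exp (2 * Real.pi * I * (n * τ))) ^ 2 * exp (ξ ^ 2 * e2Summand n τ) := by
  have hnτ : (n * τ : ℂ) ∈ integerComplement := by
    rintro ⟨m, hm⟩
    simpa [hn, τ.im_ne_zero] using (congrArg im hm).symm
  rw [← sin_mul_sin_div_sin_sq_eq]
  exact rowProduct_eq_of_tendsto (tendsto_prod_one_sub_div_add_sq hnτ ξ)

lemma sq_mul_rowProduct_zero : ξ ^ 2 * rowProduct τ ξ 0 =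
    (sin (Real.pi * ξ) / Real.pi) ^ 2 * exp (ξ ^ 2 * e2Summand 0 τ) := by
  rcases eq_or_ne ξ 0 with rfl | hξ
  · simp
  have limit := (tendsto_prod_one_sub_div_sq ξ).div_const (ξ ^ 2)
  rw [rowProduct_eq_of_tendsto (x := (sin (Real.pi * ξ) / Real.pi) ^ 2 / ξ ^ 2)]
  · field_simp
  · simpa [pow_ne_zero 2 hξ] using limit

lemma sq_mul_prod_rowProduct (M : ℕ) :
    ξ ^ 2 * ∏ n ∈ Finset.Icc (-M : ℤ) M, rowProduct τ ξ n =
      -(1 / (2 * Real.pi)) ^ 2 * ((exp (2 * Real.pi * I * ξ))⁻¹ *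
        (1 - exp (2 * Real.pi * I * ξ)) ^ 2 * ∏ k ∈ Finset.range M,
          ((1 - exp (2 * Real.pi * I * τ) ^ (k + 1) * (exp (2 * Real.pi * I * ξ))⁻¹) *
            (1 - exp (2 * Real.pi * I * τ) ^ (k + 1) * exp (2 * Real.pi * I * ξ)) /
            (1 - exp (2 * Real.pi * I * τ) ^ (k + 1)) ^ 2) ^ 2) *
        exp (ξ ^ 2 * ∑ n ∈ Finset.Icc (-M : ℤ) M, e2Summand n τ) := by
  have row (k : ℕ) := rowProduct_of_ne_zero τ ξ (n := k + 1) (by positivity)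
  have power (k : ℕ) : exp (2 * Real.pi * I * (((k + 1 : ℤ) : ℂ) * τ)) =
      exp (2 * Real.pi * I * τ) ^ (k + 1) := by
    rw [← exp_nat_mul]
    push_cast
    ring_nf
  simp only [power] at row
  rw [Finset.mul_sum, exp_sum, prod_Icc_neg_natCast, prod_Icc_neg_natCast, ← mul_assoc,
    sq_mul_rowProduct_zero, div_pow, sin_pi_mul_sq_eq]
  simp only [rowProduct_neg, e2Summand_even τ _, row, ← sq, mul_pow, Finset.prod_mul_distrib,
    div_pow]
  ring

variable {τ} {L : PeriodPair} (hτ : (τ : ℂ) = L.ω₂ / L.ω₁)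
include hτ

lemma hasProd_prod_rowProduct (z : ℂ) : HasProd (rowProduct τ (z / L.ω₁))
    (∏' l : L.lattice, elementaryFactorOne ((z / l) ^ 2)) := by
  have hω : L.ω₁ ≠ 0 := L.indep.ne_zero 0
  have total := (hasProd_elementaryFactorOne_sq
    (summable_inv_norm_pow_three_lattice L) z).multipliable.hasProd
  rw [← ((Equiv.prodComm ℤ ℤ).trans L.latticeEquivProd.symm.toEquiv).hasProd_iff] at total
  refine total.prod_fiberwise fun n => ?_
  convert hasProd_rowProduct τ (z / L.ω₁) n using 4 with m
  simp only [Function.comp_apply, Equiv.trans_apply, Equiv.prodComm_apply, Prod.swap_prod_mk,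
    LinearEquiv.coe_toEquiv, PeriodPair.latticeEquiv_symm_apply, hτ]
  field_simp
  rw [add_comm]

theorem wSigma_sq_eq_thetaProduct_sq : ∃ C : ℂ, ∀ z, wSigma L.ω₁ L.ω₂ z ^ 2 =
    C * exp (G2 τ / L.ω₁ ^ 2 * z ^ 2) * ((exp (2 * Real.pi * I * (z / L.ω₁)))⁻¹ *
      thetaProduct (exp (2 * Real.pi * I * τ)) (exp (2 * Real.pi * I * (z / L.ω₁))) ^ 2) := by
  have hω : L.ω₁ ≠ 0 := L.indep.ne_zero 0
  have hq := UpperHalfPlane.norm_exp_two_pi_I_lt_one τ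
  set q := exp (2 * Real.pi * I * τ) with hq_def
  refine ⟨-(L.ω₁ / (2 * Real.pi)) ^ 2 / qPochhammerInf q q ^ 4, fun z => ?_⟩
  set ξ := z / L.ω₁ with hξ
  have rows : Tendsto (fun M : ℕ => ξ ^ 2 * ∏ n ∈ Finset.Icc (-M : ℤ) M, rowProduct τ ξ n) atTop
      (𝓝 (ξ ^ 2 * ∏' l : L.lattice, elementaryFactorOne ((z / l) ^ 2))) :=
    ((hasProd_prod_rowProduct hτ z).comp Finset.tendsto_Icc_neg).const_mul _
  have eisenstein : Tendsto (fun M : ℕ => ∑ n ∈ Finset.Icc (-M : ℤ) M, e2Summand n τ) atTop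
      (𝓝 (G2 τ)) := by
    have := (summable_e2Summand_symmetricIcc τ).hasSum
    rwa [HasSum, SummationFilter.symmetricIcc_eq_map_Icc_nat, tendsto_map'_iff] at this
  simp only [sq_mul_prod_rowProduct, ← hq_def] at rows
  have limit := tendsto_nhds_unique rows
    (((tendsto_prod_theta_factors hq _).const_mul _).mul (eisenstein.const_mul (ξ ^ 2)).cexp)
  rw [wSigma_sq_eq_mul_tprod, show z ^ 2 = L.ω₁ ^ 2 * ξ ^ 2 by rw [hξ]; field_simp, mul_assoc,
    limit, show G2 τ / L.ω₁ ^ 2 * (L.ω₁ ^ 2 * ξ ^ 2) = ξ ^ 2 * G2 τ by field_simp]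
  ring

end SigmaTheta

section QuasiPeriods

open EisensteinSeries

variable {τ : ℍ} {L : PeriodPair} (hτ : (τ : ℂ) = L.ω₂ / L.ω₁)

include hτ in
lemma wSigma_add_ω₁_sq (z : ℂ) : wSigma L.ω₁ L.ω₂ (z + L.ω₁) ^ 2 =
    Complex.exp (G2 τ / L.ω₁ ^ 2 * (2 * L.ω₁ * z + L.ω₁ ^ 2)) * wSigma L.ω₁ L.ω₂ z ^ 2 := by
  have hω : L.ω₁ ≠ 0 := L.indep.ne_zero 0
  obtain ⟨C, hC⟩ := wSigma_sq_eq_thetaProduct_sq hτ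
  have nome : Complex.exp (2 * Real.pi * Complex.I * ((z + L.ω₁) / L.ω₁)) =
      Complex.exp (2 * Real.pi * Complex.I * (z / L.ω₁)) := by
    rw [add_div, div_self hω, mul_add, mul_one, Complex.exp_add, Complex.exp_two_pi_mul_I, mul_one]
  rw [hC, hC, nome, show G2 τ / L.ω₁ ^ 2 * (z + L.ω₁) ^ 2 =
    G2 τ / L.ω₁ ^ 2 * (2 * L.ω₁ * z + L.ω₁ ^ 2) + G2 τ / L.ω₁ ^ 2 * z ^ 2 by ring, Complex.exp_add]
  ring

include hτ in
lemma wSigma_add_ω₂_sq (z : ℂ) : wSigma L.ω₁ L.ω₂ (z + L.ω₂) ^ 2 =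
    Complex.exp (G2 τ / L.ω₁ ^ 2 * (2 * L.ω₂ * z + L.ω₂ ^ 2) -
      2 * Real.pi * Complex.I * ((2 * z + L.ω₂) / L.ω₁)) * wSigma L.ω₁ L.ω₂ z ^ 2 := by
  obtain ⟨C, hC⟩ := wSigma_sq_eq_thetaProduct_sq hτ
  have nome : Complex.exp (2 * Real.pi * Complex.I * ((z + L.ω₂) / L.ω₁)) =
      Complex.exp (2 * Real.pi * Complex.I * τ) *
        Complex.exp (2 * Real.pi * Complex.I * (z / L.ω₁)) := by
    rw [hτ, ← Complex.exp_add]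
    ring_nf
  rw [hC, hC, nome, thetaProduct_mul_left (UpperHalfPlane.norm_exp_two_pi_I_lt_one τ)
      (Complex.exp_ne_zero _) (Complex.exp_ne_zero _),
    show G2 τ / L.ω₁ ^ 2 * (z + L.ω₂) ^ 2 =
      G2 τ / L.ω₁ ^ 2 * (2 * L.ω₂ * z + L.ω₂ ^ 2) + G2 τ / L.ω₁ ^ 2 * z ^ 2 by ring,
    show (2 * z + L.ω₂) / L.ω₁ = τ + z / L.ω₁ + z / L.ω₁ by rw [hτ]; ring]
  simp only [mul_add, Complex.exp_sub, Complex.exp_add]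
  field_simp

include hτ in
lemma wZeta_add_ω₁ {z : ℂ} (hz : z ∉ L.lattice) :
    wZeta L.ω₁ L.ω₂ (z + L.ω₁) = wZeta L.ω₁ L.ω₂ z + G2 τ / L.ω₁ := by
  have hω : L.ω₁ ≠ 0 := L.indep.ne_zero 0
  have hσ := differentiable_wSigma L
  let multiplier (w : ℂ) := Complex.exp (G2 τ / L.ω₁ ^ 2 * (2 * L.ω₁ * w + L.ω₁ ^ 2))
  have hmultiplier : HasDerivAt multiplier (multiplier z * (2 * (G2 τ / L.ω₁))) z := by
    refine ((((hasDerivAt_id z).const_mul (2 * L.ω₁)).add_const (L.ω₁ ^ 2)).const_mul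
      (G2 τ / L.ω₁ ^ 2)).cexp.congr_deriv ?_
    simp only [multiplier, id_eq]
    field_simp
  have square (w : ℂ) : logDeriv (fun z => wSigma L.ω₁ L.ω₂ z ^ 2) w = 2 * wZeta L.ω₁ L.ω₂ w :=
    logDeriv_fun_pow (hσ w) 2
  have translate : logDeriv (fun z => wSigma L.ω₁ L.ω₂ (z + L.ω₁) ^ 2) z =
      2 * wZeta L.ω₁ L.ω₂ (z + L.ω₁) := by
    rw [← square, logDeriv_apply, logDeriv_apply, deriv_comp_add_const (wSigma L.ω₁ L.ω₂ · ^ 2)]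
  have product : logDeriv (fun z => multiplier z * wSigma L.ω₁ L.ω₂ z ^ 2) z =
      2 * (G2 τ / L.ω₁) + 2 * wZeta L.ω₁ L.ω₂ z := by
    rw [logDeriv_mul (f := multiplier) (g := (wSigma L.ω₁ L.ω₂ · ^ 2)) z
      (Complex.exp_ne_zero _) (pow_ne_zero 2 (wSigma_ne_zero hz))
      hmultiplier.differentiableAt ((hσ z).pow 2), square, logDeriv_apply, hmultiplier.deriv,
      mul_div_cancel_left₀ _ (Complex.exp_ne_zero _)]
  rw [← funext (wSigma_add_ω₁_sq hτ), translate] at product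
  linear_combination product / 2

lemma wZeta_neg (z : ℂ) : wZeta L.ω₁ L.ω₂ (-z) = -wZeta L.ω₁ L.ω₂ z := by
  have derivative : deriv (wSigma L.ω₁ L.ω₂) (-z) = deriv (wSigma L.ω₁ L.ω₂) z := by
    have := congrArg (deriv · z) (funext (wSigma_neg L))
    simpa [deriv_comp_neg] using this
  rw [wZeta, wZeta, derivative, wSigma_neg, div_neg]

include hτ in
lemma lambda1_eq_G2_div : lambda1 L.ω₁ L.ω₂ = G2 τ / L.ω₁ := by
  have translation := wZeta_add_ω₁ hτ (z := -(L.ω₁ / 2))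
    (by simpa using L.ω₁_div_two_notMem_lattice)
  rw [wZeta_neg, show -(L.ω₁ / 2) + L.ω₁ = L.ω₁ / 2 by ring] at translation
  rw [lambda1]
  linear_combination translation

end QuasiPeriods

/-- The modulus `|σ_*(z)| exp(-|z|²)` of the monic pseudopolynomial of degree one with root `0`. -/
noncomputable def sigmaModulus (ω₁ ω₂ z : ℂ) : ℝ := ‖sigmaStar ω₁ ω₂ z‖ * Real.exp (-‖z‖ ^ 2)

section Modulus

open EisensteinSeries

lemma sigmaModulus_nonneg (ω₁ ω₂ z : ℂ) : 0 ≤ sigmaModulus ω₁ ω₂ z := by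
  unfold sigmaModulus
  positivity

lemma sigmaModulus_sq (ω₁ ω₂ z : ℂ) : sigmaModulus ω₁ ω₂ z ^ 2 =
    ‖wSigma ω₁ ω₂ z ^ 2‖ * Real.exp ((2 * bconst ω₁ ω₂ * z ^ 2).re - 2 * ‖z‖ ^ 2) := by
  rw [sigmaModulus, sigmaStar, norm_mul, Complex.norm_exp, mul_pow, mul_pow, ← Real.exp_nat_mul,
    ← Real.exp_nat_mul, norm_pow, Real.exp_sub, mul_neg, Real.exp_neg, mul_assoc 2,
    Complex.mul_re 2]
  simp
  ring

lemma sigmaModulus_add_eq {ω₁ ω₂ ω z E : ℂ}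
    (hσ : wSigma ω₁ ω₂ (z + ω) ^ 2 = Complex.exp E * wSigma ω₁ ω₂ z ^ 2)
    (hE : (E + 2 * bconst ω₁ ω₂ * (2 * ω * z + ω ^ 2)).re = 2 * (‖z + ω‖ ^ 2 - ‖z‖ ^ 2)) :
    sigmaModulus ω₁ ω₂ (z + ω) = sigmaModulus ω₁ ω₂ z := by
  rw [← sq_eq_sq₀ (sigmaModulus_nonneg ..) (sigmaModulus_nonneg ..), sigmaModulus_sq,
    sigmaModulus_sq, hσ, norm_mul, Complex.norm_exp, mul_right_comm, mul_comm, ← Real.exp_add]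
  have expand : 2 * bconst ω₁ ω₂ * (z + ω) ^ 2 = 2 * bconst ω₁ ω₂ * z ^ 2 +
    2 * bconst ω₁ ω₂ * (2 * ω * z + ω ^ 2) := by ring
  rw [Complex.add_re] at hE
  rw [expand, Complex.add_re]
  congr 2
  linear_combination hE

lemma two_mul_norm_add_sq_sub (z ω : ℂ) :
    2 * (‖z + ω‖ ^ 2 - ‖z‖ ^ 2) = (2 * (2 * ω * z + ω ^ 2)).re + 4 * ω.im * (2 * z + ω).im := by
  simp only [← Complex.normSq_eq_norm_sq, Complex.normSq_apply, pow_two ω, Complex.add_re,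
    Complex.add_im, Complex.mul_re, Complex.mul_im, Complex.re_ofNat, Complex.im_ofNat]
  ring

variable {L : PeriodPair} (h1 : L.ω₁.im = 0) (harea : L.ω₁.re * L.ω₂.im = Real.pi / 2)
include h1 harea

theorem sigmaModulus_add_of_mem_lattice (z : ℂ) {ω : ℂ} (hω : ω ∈ L.lattice) :
    sigmaModulus L.ω₁ L.ω₂ (z + ω) = sigmaModulus L.ω₁ L.ω₂ z := by
  have hre : L.ω₁.re ≠ 0 := left_ne_zero_of_mul (harea.trans_ne (by positivity))
  have hω₁ : L.ω₁ ≠ 0 := L.indep.ne_zero 0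
  have hreal : L.ω₁ = (L.ω₁.re : ℂ) := Complex.ext rfl h1
  have him : (L.ω₂ / L.ω₁).im = Real.pi / 2 / L.ω₁.re ^ 2 := by
    rw [hreal, Complex.div_ofReal_im, ← hreal]
    field_simp
    linear_combination 2 * harea
  obtain ⟨τ, hτ⟩ : ∃ τ : UpperHalfPlane, (τ : ℂ) = L.ω₂ / L.ω₁ :=
    ⟨⟨_, him ▸ by positivity⟩, rfl⟩
  have hb : 2 * bconst L.ω₁ L.ω₂ = 2 - G2 τ / L.ω₁ ^ 2 := by
    rw [bconst, lambda1_eq_G2_div hτ]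
    ring
  have period₁ : Function.Periodic (sigmaModulus L.ω₁ L.ω₂) L.ω₁ := fun z => by
    refine sigmaModulus_add_eq (wSigma_add_ω₁_sq hτ z) ?_
    rw [two_mul_norm_add_sq_sub, hb, h1, mul_zero, zero_mul, add_zero]
    ring_nf
  have period₂ : Function.Periodic (sigmaModulus L.ω₁ L.ω₂) L.ω₂ := fun z => by
    refine sigmaModulus_add_eq (wSigma_add_ω₂_sq hτ z) ?_
    have hπ : 2 * (Real.pi : ℂ) = L.ω₁ * (4 * L.ω₂.im : ℝ) := by
      rw [hreal]
      exact_mod_cast show 2 * Real.pi = L.ω₁.re * (4 * L.ω₂.im) by linear_combination -4 * harea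
    have exponent : 2 * Real.pi * Complex.I * ((2 * z + L.ω₂) / L.ω₁) =
        (4 * L.ω₂.im : ℝ) * (Complex.I * (2 * z + L.ω₂)) := by
      rw [hπ]
      field_simp
    rw [two_mul_norm_add_sq_sub, hb, exponent, Complex.add_re, Complex.sub_re, sub_mul,
      Complex.sub_re, Complex.re_ofReal_mul, Complex.I_mul_re]
    ring
  obtain ⟨m, n, rfl⟩ := L.mem_lattice.mp hω
  rw [← add_assoc, period₂.int_mul n, period₁.int_mul m]

lemma sigmaModulus_eq_zero_of_mem_lattice {ω : ℂ} (hω : ω ∈ L.lattice) :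
    sigmaModulus L.ω₁ L.ω₂ ω = 0 := by
  rw [← zero_add ω, sigmaModulus_add_of_mem_lattice h1 harea 0 hω, sigmaModulus, sigmaStar,
    wSigma_zero, mul_zero, norm_zero, zero_mul]

end Modulus

section LogNorm

lemma locallyIntegrable_comp_sub_right {E : Type*} [NormedAddCommGroup E] {f : ℂ → E}
    (hf : LocallyIntegrable f) (a : ℂ) : LocallyIntegrable fun z => f (z - a) := by
  refine (locallyIntegrable_map_homeomorph (Homeomorph.subRight a)).mp ?_
  exact (map_sub_right_eq_self volume a).symm ▸ hf

lemma abs_log_le_add_inv {x : ℝ} (hx : 0 ≤ x) : |Real.log x| ≤ x + x⁻¹ := by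
  rcases hx.eq_or_lt with rfl | hx
  · simp
  have upper := Real.log_le_sub_one_of_pos hx
  have lower := Real.one_sub_inv_le_log_of_pos hx
  have := inv_pos.mpr hx
  exact abs_le.mpr ⟨by linarith, by linarith⟩

lemma locallyIntegrable_log_norm_sub (a : ℂ) :
    LocallyIntegrable fun z : ℂ => Real.log ‖z - a‖ := by
  refine locallyIntegrable_comp_sub_right (f := fun z : ℂ => Real.log ‖z‖) ?_ a
  have pole : LocallyIntegrable fun z : ℂ => ‖z‖⁻¹ := by
    refine locallyIntegrable_of_norm_le_rpow (C := 1) (α := 1) (by simp) (by simp) ?_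
      measurable_norm.inv.aestronglyMeasurable
    simp [Real.rpow_neg_one]
  refine (continuous_norm.locallyIntegrable.add pole).mono
    (Real.measurable_log.comp measurable_norm).aestronglyMeasurable (ae_of_all _ fun z => ?_)
  exact (abs_log_le_add_inv (norm_nonneg z)).trans (le_abs_self _)

theorem locallyIntegrable_log_norm {f : ℂ → ℂ} (hf : Differentiable ℂ f) {z₀ : ℂ}
    (hz₀ : f z₀ ≠ 0) : LocallyIntegrable fun z => Real.log ‖f z‖ := by
  intro a
  have nontrivial : ¬ ∀ᶠ z in 𝓝 a, f z = 0 := fun h => hz₀ <|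
    congrFun (AnalyticOnNhd.eq_of_eventuallyEq (g := 0) (fun z _ => hf.analyticAt z)
      (fun z _ => analyticAt_const) h) z₀
  obtain ⟨n, g, hg, hga, factorization⟩ :=
    (hf.analyticAt a).exists_eventuallyEq_pow_smul_nonzero_iff.mpr nontrivial
  obtain ⟨ε, hε, hball⟩ := Metric.nhds_basis_closedBall.eventually_iff.mp
    (factorization.and (hg.eventually_continuousAt.and (hg.continuousAt.eventually_ne hga)))
  have hcompact := isCompact_closedBall a ε
  have unit : IntegrableOn (fun z => Real.log ‖g z‖) (Metric.closedBall a ε) :=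
    (ContinuousOn.log (fun z hz => (hball hz).2.1.norm.continuousWithinAt)
      fun z hz => norm_ne_zero_iff.mpr (hball hz).2.2).integrableOn_compact hcompact
  have pole :=
    ((locallyIntegrable_log_norm_sub a).integrableOn_isCompact hcompact).const_mul (n : ℝ)
  refine ⟨Metric.closedBall a ε, Metric.closedBall_mem_nhds a hε, (pole.add unit).congr ?_⟩
  filter_upwards [ae_restrict_of_ae (Measure.ae_ne volume a),
    ae_restrict_mem measurableSet_closedBall] with z hza hz
  rw [Pi.add_apply, (hball hz).1, norm_smul, norm_pow, Real.log_mul, Real.log_pow]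
  · exact pow_ne_zero n (norm_ne_zero_iff.mpr (sub_ne_zero.mpr hza))
  · exact norm_ne_zero_iff.mpr (hball hz).2.2

end LogNorm

section Jensen

lemma log_norm_le_circleAverage {f : ℂ → ℂ} (hf : Differentiable ℂ f) (h0 : f 0 ≠ 0) :
    Real.log ‖f 0‖ ≤ Real.circleAverage (fun z => Real.log ‖f z‖) 0 1 := by
  have analytic : AnalyticOnNhd ℂ f (Metric.closedBall 0 |(1 : ℝ)|) := fun z _ => hf.analyticAt z
  rw [analytic.circleAverage_log_norm one_ne_zero h0]
  refine le_add_of_nonneg_left (finsum_nonneg fun u => ?_)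
  by_cases hu : u ∈ Metric.closedBall (0 : ℂ) |(1 : ℝ)|
  · refine mul_nonneg (mod_cast MeromorphicOn.AnalyticOnNhd.divisor_nonneg analytic u) ?_
    simpa using Real.log_nonpos (norm_nonneg u) (by simpa using hu)
  · simp [Function.locallyFinsuppWithin.apply_eq_zero_of_notMem _ hu]

lemma measurePreserving_circleMap_mul_restrict_ball (r θ : ℝ) :
    MeasurePreserving (circleMap 0 1 θ * ·) (volume.restrict (Metric.ball (0 : ℂ) r))
      (volume.restrict (Metric.ball 0 r)) := by
  have := (rotation (Circle.exp θ)).measurePreserving.restrict_preimage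
    (measurableSet_ball (x := (0 : ℂ)) (ε := r))
  rw [LinearIsometryEquiv.preimage_ball, map_zero] at this
  convert! this using 2
  simp [circleMap, rotation_apply]

variable {E : Type*} [NormedAddCommGroup E] {u : ℂ → E} {r : ℝ}

lemma integrable_comp_circleMap_mul (hu : IntegrableOn u (Metric.ball 0 r)) :
    Integrable (fun p : ℝ × ℂ => u (circleMap 0 1 p.1 * p.2))
      ((volume.restrict (Set.Ioc 0 (2 * Real.pi))).prod (volume.restrict (Metric.ball 0 r))) := by
  have shear := (MeasurePreserving.id (volume.restrict (Set.Ioc 0 (2 * Real.pi)))).skew_product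
    (g := fun θ w => circleMap 0 1 θ * w) (by unfold Function.uncurry; fun_prop)
    (ae_of_all _ fun θ => (measurePreserving_circleMap_mul_restrict_ball r θ).map_eq)
  exact shear.integrable_comp_of_integrable (hu.comp_snd _)

variable [NormedSpace ℝ E]

lemma integrableOn_circleAverage_mul (hu : IntegrableOn u (Metric.ball 0 r)) :
    IntegrableOn (fun w => Real.circleAverage (fun z => u (z * w)) 0 1) (Metric.ball 0 r) := by
  simp only [Real.circleAverage, intervalIntegral.integral_of_le Real.two_pi_pos.le]
  exact (integrable_comp_circleMap_mul hu).integral_prod_right.smul _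

lemma setIntegral_ball_circleAverage_mul [CompleteSpace E] (hu : IntegrableOn u (Metric.ball 0 r)) :
    ∫ w in Metric.ball 0 r, Real.circleAverage (fun z => u (z * w)) 0 1 =
      ∫ w in Metric.ball 0 r, u w := by
  simp only [Real.circleAverage, intervalIntegral.integral_of_le Real.two_pi_pos.le]
  rw [integral_smul, ← integral_integral_swap (integrable_comp_circleMap_mul hu)]
  have rotation_invariance (θ : ℝ) : ∫ w in Metric.ball 0 r, u (circleMap 0 1 θ * w) =
      ∫ w in Metric.ball 0 r, u w :=
    (measurePreserving_circleMap_mul_restrict_ball r θ).integral_comp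
      (measurableEmbedding_mulLeft₀ (circleMap_ne_center one_ne_zero)) u
  simp only [rotation_invariance]
  rw [setIntegral_const, smul_smul, Real.volume_real_Ioc_of_le Real.two_pi_pos.le, sub_zero,
    inv_mul_cancel₀ Real.two_pi_pos.ne', one_smul]

theorem mul_log_norm_le_setIntegral_ball {f : ℂ → ℂ} (hf : Differentiable ℂ f) (h0 : f 0 ≠ 0)
    (r : ℝ) : volume.real (Metric.ball (0 : ℂ) r) * Real.log ‖f 0‖ ≤
      ∫ z in Metric.ball 0 r, Real.log ‖f z‖ := by
  have hu : IntegrableOn (fun z => Real.log ‖f z‖) (Metric.ball 0 r) :=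
    ((locallyIntegrable_log_norm hf h0).integrableOn_isCompact
      (isCompact_closedBall 0 r)).mono_set Metric.ball_subset_closedBall
  rw [← setIntegral_ball_circleAverage_mul hu, ← smul_eq_mul, ← setIntegral_const]
  refine integral_mono (integrableOn_const (by finiteness)) (integrableOn_circleAverage_mul hu)
    fun w => ?_
  simpa using log_norm_le_circleAverage (f := fun z => f (z * w)) (hf.comp (by fun_prop))
    (by simpa using h0)

end Jensen

section FundamentalDomain

variable {G E ι : Type*} [AddCommGroup G] {Λ Γ : AddSubgroup G} {D P : Set G} {ζ : ι → G}

lemma pairwise_disjoint_preimage_add_right (hζ : ∀ j, ζ j ∈ Γ)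
    (hrep : ∀ x ∈ Γ, ∃! j, x - ζ j ∈ Λ) (hP : ∀ x, ∃! γ : Γ, γ +ᵥ x ∈ P) :
    Pairwise (Function.onFun Disjoint fun j => (· + ζ j) ⁻¹' P) := by
  refine fun i j hij => Set.disjoint_left.mpr fun x hi hj => hij ?_
  have hζij : ζ i = ζ j := congrArg Subtype.val <| (hP x).unique (y₁ := ⟨ζ i, hζ i⟩)
    (y₂ := ⟨ζ j, hζ j⟩) ((add_comm _ _).subst hi) ((add_comm _ _).subst hj)
  exact (hrep (ζ i) (hζ i)).unique (by simp) (by simp [hζij])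

lemma existsUnique_vadd_mem_iUnion_preimage_add_right (hΛΓ : Λ ≤ Γ) (hζ : ∀ j, ζ j ∈ Γ)
    (hrep : ∀ x ∈ Γ, ∃! j, x - ζ j ∈ Λ) (hP : ∀ x, ∃! γ : Γ, γ +ᵥ x ∈ P) (x : G) :
    ∃! ω : Λ, ω +ᵥ x ∈ ⋃ j, (· + ζ j) ⁻¹' P := by
  obtain ⟨γ, hγ, γ_unique⟩ := hP x
  obtain ⟨j, hj, j_unique⟩ := hrep γ γ.2
  refine ⟨⟨γ - ζ j, hj⟩, Set.mem_iUnion.mpr ⟨j, ?_⟩, fun ω hω => ?_⟩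
  · simpa [AddSubgroup.vadd_def, add_right_comm _ x] using hγ
  · obtain ⟨i, hi⟩ := Set.mem_iUnion.mp hω
    have hωγ : (ω : G) + ζ i = γ := congrArg Subtype.val <|
      γ_unique ⟨ω + ζ i, add_mem (hΛΓ ω.2) (hζ i)⟩ <| by
        simpa [AddSubgroup.vadd_def, add_right_comm _ x] using hi
    obtain rfl := j_unique i (by simp [← hωγ])
    simp [← hωγ]

variable [MeasurableSpace G] [MeasurableAdd G] {μ : Measure G} [μ.IsAddLeftInvariant]
  [Countable Λ] [NormedAddCommGroup E] [NormedSpace ℝ E] {u : G → E}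

lemma setIntegral_comp_add_right_of_invariant (hD : IsAddFundamentalDomain Λ D μ)
    (hu : ∀ (ω : Λ) z, u (ω +ᵥ z) = u z) (a : G) :
    ∫ z in D, u (z + a) ∂μ = ∫ z in D, u z ∂μ := by
  have translate : IsAddFundamentalDomain Λ ((· + a) '' D) μ := by
    simp only [add_comm _ a]
    exact hD.vadd_of_comm a
  rw [hD.setIntegral_eq translate hu,
    (measurePreserving_add_right μ a).setIntegral_image_emb
      (MeasurableEquiv.addRight a).measurableEmbedding]

theorem setIntegral_sum_comp_sub_of_representatives [Fintype ι] (hΛΓ : Λ ≤ Γ)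
    (hζ : ∀ j, ζ j ∈ Γ) (hrep : ∀ x ∈ Γ, ∃! j, x - ζ j ∈ Λ) (hPm : MeasurableSet P)
    (hP : ∀ x, ∃! γ : Γ, γ +ᵥ x ∈ P) (hD : IsAddFundamentalDomain Λ D μ)
    (hu : ∀ (ω : Λ) z, u (ω +ᵥ z) = u z) (hui : IntegrableOn u D μ) :
    ∫ z in P, ∑ j, u (z - ζ j) ∂μ = ∫ z in D, u z ∂μ := by
  have hQm : ∀ j, MeasurableSet ((· + ζ j) ⁻¹' P) := fun j => hPm.preimage (by fun_prop)
  have hQ : IsAddFundamentalDomain Λ (⋃ j, (· + ζ j) ⁻¹' P) μ :=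
    .mk' (MeasurableSet.iUnion hQm).nullMeasurableSet
      (existsUnique_vadd_mem_iUnion_preimage_add_right hΛΓ hζ hrep hP)
  have huQ : ∀ j, IntegrableOn u ((· + ζ j) ⁻¹' P) μ := fun j =>
    ((hD.integrableOn_iff hQ hu).mp hui).mono_set (Set.subset_iUnion_of_subset j le_rfl)
  have preserving (j : ι) := measurePreserving_add_right μ (ζ j)
  have emb (j : ι) := (MeasurableEquiv.addRight (ζ j)).measurableEmbedding
  rw [hD.setIntegral_eq hQ hu, integral_iUnion_fintype hQm
    (pairwise_disjoint_preimage_add_right hζ hrep hP) huQ, integral_finsetSum]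
  · refine Finset.sum_congr rfl fun j _ => ?_
    rw [← (preserving j).setIntegral_preimage_emb (emb j)]
    simp only [add_sub_cancel_right]
  · intro j _
    rw [← (preserving j).restrict_preimage hPm |>.integrable_comp_emb (emb j)]
    simpa [Function.comp_def, IntegrableOn] using huQ j

end FundamentalDomain

/-- The Green potential `U_{ℂ/Λ}(·, 0)`, whose value at the lattice points is fixed by the
convention `Real.log 0 = 0`, which makes it periodic on the whole plane. -/
noncomputable def greenPotential (L : PeriodPair) (z : ℂ) : ℝ :=
  Real.log (sigmaModulus L.ω₁ L.ω₂ z) - Aconst L.ω₁ L.ω₂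

section GreenPotential

variable (L : PeriodPair)

lemma differentiable_sigmaStar : Differentiable ℂ (sigmaStar L.ω₁ L.ω₂) := by
  have := differentiable_wSigma L
  unfold sigmaStar
  fun_prop

lemma continuous_sigmaModulus : Continuous (sigmaModulus L.ω₁ L.ω₂) := by
  have := (differentiable_sigmaStar L).continuous
  unfold sigmaModulus
  fun_prop

lemma fundDomain_eq_fundamentalDomain_basis :
    fundDomain L.ω₁ L.ω₂ = ZSpan.fundamentalDomain L.basis := by
  ext z
  simp only [fundDomain, Set.mem_image, Set.mem_prod, Prod.exists, ZSpan.mem_fundamentalDomain,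
    Fin.forall_fin_two]
  constructor
  · rintro ⟨x, y, hxy, rfl⟩
    have coordinates : L.basis.repr (x * L.ω₁ + y * L.ω₂) = ![x, y] := by
      rw [show (x : ℂ) * L.ω₁ + y * L.ω₂ = ∑ i, ![x, y] i • L.basis i by simp,
        L.basis.repr_sum_self]
    rw [coordinates]
    exact hxy
  · rintro ⟨hx, hy⟩
    refine ⟨_, _, ⟨hx, hy⟩, ?_⟩
    simpa [Fin.sum_univ_two] using L.basis.sum_repr z

lemma measurableSet_fundDomain : MeasurableSet (fundDomain L.ω₁ L.ω₂) := by
  rw [fundDomain_eq_fundamentalDomain_basis]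
  exact ZSpan.fundamentalDomain_measurableSet L.basis

lemma existsUnique_vadd_mem_fundDomain (z : ℂ) :
    ∃! ω : L.lattice.toAddSubgroup, ω +ᵥ z ∈ fundDomain L.ω₁ L.ω₂ := by
  rw [fundDomain_eq_fundamentalDomain_basis]
  have := ZSpan.exist_unique_vadd_mem_fundamentalDomain L.basis z
  rw [← L.lattice_eq_span_range_basis] at this
  exact this

lemma isAddFundamentalDomain_fundDomain :
    IsAddFundamentalDomain L.lattice.toAddSubgroup (fundDomain L.ω₁ L.ω₂) :=
  .mk' (measurableSet_fundDomain L).nullMeasurableSet (existsUnique_vadd_mem_fundDomain L)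

lemma isBounded_fundDomain : Bornology.IsBounded (fundDomain L.ω₁ L.ω₂) := by
  rw [fundDomain_eq_fundamentalDomain_basis]
  exact ZSpan.fundamentalDomain_isBounded L.basis

lemma norm_le_of_mem_fundDomain {ω₁ ω₂ z : ℂ} (hz : z ∈ fundDomain ω₁ ω₂) : ‖z‖ ≤ ‖ω₁‖ + ‖ω₂‖ := by
  obtain ⟨⟨x, y⟩, ⟨hx, hy⟩, rfl⟩ := hz
  refine norm_add_le_of_le ?_ ?_ <;> rw [norm_mul, Complex.norm_real, Real.norm_eq_abs]
  · exact mul_le_of_le_one_left (norm_nonneg _) (abs_le.mpr ⟨by linarith [hx.1], hx.2.le⟩)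
  · exact mul_le_of_le_one_left (norm_nonneg _) (abs_le.mpr ⟨by linarith [hy.1], hy.2.le⟩)

lemma measureReal_fundDomain :
    volume.real (fundDomain L.ω₁ L.ω₂) = |L.ω₁.re * L.ω₂.im - L.ω₁.im * L.ω₂.re| := by
  have unit_square : volume.real (ZSpan.fundamentalDomain Complex.basisOneI) = 1 := by
    rw [measureReal_congr (ZSpan.fundamentalDomain_ae_parallelepiped _ _), measureReal_def,
      ← Complex.toBasis_orthonormalBasisOneI, OrthonormalBasis.coe_toBasis,
      Complex.orthonormalBasisOneI.volume_parallelepiped, ENNReal.toReal_one]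
  rw [fundDomain_eq_fundamentalDomain_basis,
    ZSpan.measureReal_fundamentalDomain L.basis volume Complex.basisOneI, unit_square, mul_one,
    Module.Basis.det_apply, Matrix.det_fin_two]
  simp [Module.Basis.toMatrix_apply, mul_comm]

lemma ae_sub_notMem_lattice (w : ℂ) : ∀ᵐ z : ℂ, z - w ∉ L.lattice := by
  have : (L.lattice : Set ℂ).Countable :=
    Set.countable_coe_iff.mp (inferInstanceAs (Countable L.lattice))
  exact (this.preimage (sub_left_injective (b := w))).ae_notMem volume

variable {L} {z : ℂ}

lemma sigmaStar_ne_zero (hz : z ∉ L.lattice) : sigmaStar L.ω₁ L.ω₂ z ≠ 0 :=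
  mul_ne_zero (Complex.exp_ne_zero _) (wSigma_ne_zero hz)

lemma sigmaModulus_pos (hz : z ∉ L.lattice) : 0 < sigmaModulus L.ω₁ L.ω₂ z :=
  mul_pos (norm_pos_iff.mpr (sigmaStar_ne_zero hz)) (Real.exp_pos _)

lemma log_sigmaModulus (hz : z ∉ L.lattice) :
    Real.log (sigmaModulus L.ω₁ L.ω₂ z) = Real.log ‖sigmaStar L.ω₁ L.ω₂ z‖ - ‖z‖ ^ 2 := by
  rw [sigmaModulus, Real.log_mul (norm_ne_zero_iff.mpr (sigmaStar_ne_zero hz))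
    (Real.exp_ne_zero _), Real.log_exp, sub_eq_add_neg]

lemma Utorus_eq_greenPotential_sub {w : ℂ} (hzw : z - w ∉ L.lattice) :
    Utorus L.ω₁ L.ω₂ z w = greenPotential L (z - w) := by
  rw [Utorus, greenPotential, log_sigmaModulus hzw]

variable (L)

lemma locallyIntegrable_greenPotential : LocallyIntegrable (greenPotential L) := by
  have hω : sigmaStar L.ω₁ L.ω₂ (L.ω₁ / 2) ≠ 0 := sigmaStar_ne_zero L.ω₁_div_two_notMem_lattice
  have hlog : LocallyIntegrable fun z : ℂ =>
      Real.log ‖sigmaStar L.ω₁ L.ω₂ z‖ - ‖z‖ ^ 2 - Aconst L.ω₁ L.ω₂ :=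
    ((locallyIntegrable_log_norm (differentiable_sigmaStar L) hω).sub
      (by fun_prop : Continuous fun z : ℂ => ‖z‖ ^ 2).locallyIntegrable).sub
        (locallyIntegrable_const _)
  refine hlog.congr ?_
  filter_upwards [ae_sub_notMem_lattice L 0] with z hz
  rw [sub_zero] at hz
  rw [greenPotential, log_sigmaModulus hz]

lemma integrableOn_greenPotential_sub (w : ℂ) {s : Set ℂ} (hs : Bornology.IsBounded s) :
    IntegrableOn (fun z => greenPotential L (z - w)) s :=
  ((locallyIntegrable_comp_sub_right (locallyIntegrable_greenPotential L) w).integrableOn_isCompact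
    hs.isCompact_closure).mono_set subset_closure

/- After division by an exponential factor that is holomorphic up to a unimodular factor, the
modulus of `σ_*` around `z` is `exp (greenPotential L (w + z) + ‖w‖ ^ 2)`. -/
lemma exists_log_norm_eq_greenPotential_add (z : ℂ) : ∃ f : ℂ → ℂ, Differentiable ℂ f ∧
    ∀ w, w + z ∉ L.lattice → f w ≠ 0 ∧
      Real.log ‖f w‖ = greenPotential L (w + z) + ‖w‖ ^ 2 := by
  refine ⟨fun w => sigmaStar L.ω₁ L.ω₂ (w + z) *
    Complex.exp (-(2 * starRingEnd ℂ z * w) - (‖z‖ ^ 2 + Aconst L.ω₁ L.ω₂ : ℝ)),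
    ((differentiable_sigmaStar L).comp (by fun_prop)).mul (by fun_prop), fun w hw => ?_⟩
  have hσ := sigmaStar_ne_zero hw
  refine ⟨mul_ne_zero hσ (Complex.exp_ne_zero _), ?_⟩
  rw [norm_mul, Real.log_mul (norm_ne_zero_iff.mpr hσ) (by simp), Complex.norm_exp, Real.log_exp,
    greenPotential, log_sigmaModulus hw]
  simp only [← Complex.normSq_eq_norm_sq, Complex.normSq_apply, Complex.sub_re, Complex.neg_re,
    Complex.mul_re, Complex.mul_im, Complex.conj_re, Complex.conj_im, Complex.ofReal_re,
    Complex.add_re, Complex.add_im, Complex.re_ofNat, Complex.im_ofNat]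
  ring

theorem volume_ball_mul_greenPotential_le {z : ℂ} (hz : z ∉ L.lattice) (r : ℝ) :
    volume.real (Metric.ball (0 : ℂ) r) * greenPotential L z ≤
      (∫ w in Metric.ball 0 r, greenPotential L (w + z)) +
        volume.real (Metric.ball (0 : ℂ) r) * r ^ 2 := by
  obtain ⟨f, hf, hfG⟩ := exists_log_norm_eq_greenPotential_add L z
  obtain ⟨hf0, hlog0⟩ := hfG 0 (by rwa [zero_add])
  have hG : IntegrableOn (fun w => greenPotential L (w + z)) (Metric.ball 0 r) := by
    simpa only [sub_neg_eq_add] using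
      integrableOn_greenPotential_sub L (-z) (Metric.isBounded_ball (x := 0) (r := r))
  have hr : IntegrableOn (fun _ : ℂ => r ^ 2) (Metric.ball 0 r) :=
    integrableOn_const measure_ball_lt_top.ne
  calc volume.real (Metric.ball (0 : ℂ) r) * greenPotential L z
      = volume.real (Metric.ball (0 : ℂ) r) * Real.log ‖f 0‖ := by
        rw [hlog0, zero_add, norm_zero, zero_pow two_ne_zero, add_zero]
    _ ≤ ∫ w in Metric.ball 0 r, Real.log ‖f w‖ := mul_log_norm_le_setIntegral_ball hf hf0 r
    _ ≤ ∫ w in Metric.ball 0 r, (greenPotential L (w + z) + r ^ 2) := by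
        refine setIntegral_mono_on_ae ((locallyIntegrable_log_norm hf hf0).integrableOn_isCompact
          (isCompact_closedBall 0 r) |>.mono_set Metric.ball_subset_closedBall) (hG.add hr)
          measurableSet_ball ?_
        filter_upwards [ae_sub_notMem_lattice L (-z)] with w hw hwr
        rw [sub_neg_eq_add] at hw
        rw [(hfG w hw).2]
        gcongr
        exact (mem_ball_zero_iff.mp hwr).le
    _ = _ := by rw [integral_add hG hr, setIntegral_const, smul_eq_mul]

section Periodic

variable {L}
variable (h1 : L.ω₁.im = 0) (harea : L.ω₁.re * L.ω₂.im = Real.pi / 2)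
include h1 harea

lemma measureReal_fundDomain_eq_pi_div_two : volume.real (fundDomain L.ω₁ L.ω₂) = Real.pi / 2 := by
  rw [measureReal_fundDomain, h1, harea, zero_mul, sub_zero, abs_of_nonneg (by positivity)]

lemma greenPotential_vadd (ω : L.lattice.toAddSubgroup) (z : ℂ) :
    greenPotential L (ω +ᵥ z) = greenPotential L z := by
  rw [AddSubgroup.vadd_def, vadd_eq_add, add_comm, greenPotential,
    sigmaModulus_add_of_mem_lattice h1 harea z ω.2, greenPotential]

lemma setIntegral_greenPotential : ∫ z in fundDomain L.ω₁ L.ω₂, greenPotential L z = 0 := by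
  have hA : ∫ z in fundDomain L.ω₁ L.ω₂, (greenPotential L z + Aconst L.ω₁ L.ω₂) =
      Real.pi / 2 * Aconst L.ω₁ L.ω₂ := by
    have hlog : ∀ᵐ z : ℂ, greenPotential L z + Aconst L.ω₁ L.ω₂ =
        Real.log ‖sigmaStar L.ω₁ L.ω₂ z‖ - ‖z‖ ^ 2 := by
      filter_upwards [ae_sub_notMem_lattice L 0] with z hz
      rw [sub_zero] at hz
      rw [greenPotential, sub_add_cancel, log_sigmaModulus hz]
    rw [integral_congr_ae (ae_restrict_of_ae hlog), Aconst]
    field_simp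
  have hG : IntegrableOn (greenPotential L) (fundDomain L.ω₁ L.ω₂) := by
    simpa only [sub_zero] using integrableOn_greenPotential_sub L 0 (isBounded_fundDomain L)
  have finite : volume (fundDomain L.ω₁ L.ω₂) ≠ ⊤ := (isBounded_fundDomain L).measure_lt_top.ne
  rw [integral_add hG (integrableOn_const finite), setIntegral_const,
    measureReal_fundDomain_eq_pi_div_two h1 harea, smul_eq_mul] at hA
  exact add_eq_right.mp hA

end Periodic

end GreenPotential

section MaximumArgument

lemma measureReal_mul_le_of_mul_le_setIntegral {α : Type*} [MeasurableSpace α] {μ : Measure α}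
    {F : α → ℝ} {P B : Set α} {m c : ℝ} (hPB : P ⊆ B) (hP : MeasurableSet P)
    (hB : μ B ≠ ⊤) (hF : IntegrableOn F B μ) (hm : ∀ᵐ x ∂μ, F x ≤ m) (hP0 : ∫ x in P, F x ∂μ = 0)
    (hBm : μ.real B * m ≤ (∫ x in B, F x ∂μ) + c) : μ.real P * m ≤ c := by
  have complement : ∫ x in B \ P, F x ∂μ ≤ (μ.real B - μ.real P) * m := by
    rw [← measureReal_sdiff hPB hP, ← smul_eq_mul, ← setIntegral_const]
    exact setIntegral_mono_ae (hF.mono_set Set.sdiff_subset)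
      (integrableOn_const (measure_ne_top_of_subset Set.sdiff_subset hB)) hm
  have split : ∫ x in B \ P, F x ∂μ = ∫ x in B, F x ∂μ := by
    rw [setIntegral_sdiff hP hF hPB, hP0, sub_zero]
  linarith

variable {L M : PeriodPair} {ι : Type*} [Fintype ι] {ζ : ι → ℂ}
  (h1 : L.ω₁.im = 0) (harea : L.ω₁.re * L.ω₂.im = Real.pi / 2)

include h1 harea in
lemma exists_sum_greenPotential_sub_le (ζ : ι → ℂ) : ∃ z₀, (∀ j, z₀ - ζ j ∉ L.lattice) ∧
    ∀ z, (∀ j, z - ζ j ∉ L.lattice) →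
      ∑ j, greenPotential L (z - ζ j) ≤ ∑ j, greenPotential L (z₀ - ζ j) := by
  have hcont := continuous_sigmaModulus L
  have compact : IsCompact (Set.range fun z => ∏ j, sigmaModulus L.ω₁ L.ω₂ (z - ζ j)) := by
    refine IsZLattice.isCompact_range_of_periodic L.lattice _ (by fun_prop) fun z ω hω => ?_
    simp only [add_sub_right_comm, sigmaModulus_add_of_mem_lattice h1 harea _ hω]
  obtain ⟨_, ⟨z₀, rfl⟩, z₀_max⟩ := compact.exists_isGreatest (Set.range_nonempty _)
  have prod_pos (z : ℂ) (hz : ∀ j, z - ζ j ∉ L.lattice) :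
      0 < ∏ j, sigmaModulus L.ω₁ L.ω₂ (z - ζ j) :=
    Finset.prod_pos fun j _ => sigmaModulus_pos (hz j)
  have sum_eq (z : ℂ) (hz : ∀ j, z - ζ j ∉ L.lattice) : ∑ j, greenPotential L (z - ζ j) =
      Real.log (∏ j, sigmaModulus L.ω₁ L.ω₂ (z - ζ j)) - ∑ _j : ι, Aconst L.ω₁ L.ω₂ := by
    rw [Real.log_prod fun j _ => (sigmaModulus_pos (hz j)).ne', ← Finset.sum_sub_distrib]
    rfl
  obtain ⟨z₁, hz₁⟩ := (ae_all_iff.mpr fun j => ae_sub_notMem_lattice L (ζ j)).exists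
  have hz₀ : ∀ j, z₀ - ζ j ∉ L.lattice := fun j hj =>
    ((prod_pos z₁ hz₁).trans_le (z₀_max ⟨z₁, rfl⟩)).ne' <|
      Finset.prod_eq_zero (Finset.mem_univ j) (sigmaModulus_eq_zero_of_mem_lattice h1 harea hj)
  refine ⟨z₀, hz₀, fun z hz => ?_⟩
  rw [sum_eq z hz, sum_eq z₀ hz₀]
  exact sub_le_sub_right (Real.log_le_log (prod_pos z hz) (z₀_max ⟨z, rfl⟩)) _

section Representatives

variable (hLM : L.lattice ≤ M.lattice) (hζ : ∀ j, ζ j ∈ M.lattice)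
  (hrep : ∀ x ∈ M.lattice, ∃! j, x - ζ j ∈ L.lattice)

include hLM hζ hrep in
lemma setIntegral_fundDomain_sum_comp_sub {u : ℂ → ℝ}
    (hu : ∀ (ω : L.lattice.toAddSubgroup) z, u (ω +ᵥ z) = u z)
    (hui : IntegrableOn u (fundDomain L.ω₁ L.ω₂)) :
    ∫ z in fundDomain M.ω₁ M.ω₂, ∑ j, u (z - ζ j) = ∫ z in fundDomain L.ω₁ L.ω₂, u z :=
  have : Countable L.lattice.toAddSubgroup := inferInstanceAs (Countable L.lattice)
  setIntegral_sum_comp_sub_of_representatives (Γ := M.lattice.toAddSubgroup) hLM hζ hrep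
    (measurableSet_fundDomain M) (existsUnique_vadd_mem_fundDomain M)
    (isAddFundamentalDomain_fundDomain L) hu hui

include h1 harea hLM hζ hrep

lemma measureReal_fundDomain_mul_card :
    volume.real (fundDomain M.ω₁ M.ω₂) * Fintype.card ι = Real.pi / 2 := by
  have := setIntegral_fundDomain_sum_comp_sub hLM hζ hrep (u := fun _ => 1) (fun _ _ => rfl)
    (integrableOn_const (isBounded_fundDomain L).measure_lt_top.ne)
  simpa [measureReal_fundDomain_eq_pi_div_two h1 harea] using this

lemma setIntegral_fundDomain_sum_greenPotential (z₀ : ℂ) :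
    ∫ z in fundDomain M.ω₁ M.ω₂, ∑ j, greenPotential L (z + (z₀ - ζ j)) = 0 := by
  have hG := greenPotential_vadd h1 harea
  have hGi : IntegrableOn (fun z => greenPotential L (z + z₀)) (fundDomain L.ω₁ L.ω₂) := by
    simpa only [sub_neg_eq_add] using
      integrableOn_greenPotential_sub L (-z₀) (isBounded_fundDomain L)
  have average := setIntegral_fundDomain_sum_comp_sub hLM hζ hrep
    (fun ω z => by rw [vadd_add_assoc, hG]) hGi
  have : Countable L.lattice.toAddSubgroup := inferInstanceAs (Countable L.lattice)
  rw [setIntegral_comp_add_right_of_invariant (isAddFundamentalDomain_fundDomain L) hG,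
    setIntegral_greenPotential h1 harea] at average
  simpa only [add_sub_assoc, sub_add_eq_add_sub] using average

theorem sum_greenPotential_sub_le {r : ℝ} (hr : ‖M.ω₁‖ + ‖M.ω₂‖ < r) {z : ℂ}
    (hz : ∀ j, z - ζ j ∉ L.lattice) :
    ∑ j, greenPotential L (z - ζ j) ≤ 2 * Fintype.card ι ^ 2 * r ^ 4 := by
  obtain ⟨z₀, hz₀, z₀_max⟩ := exists_sum_greenPotential_sub_le h1 harea ζ
  refine (z₀_max z hz).trans ?_
  set m := ∑ j, greenPotential L (z₀ - ζ j)
  have integrable (j : ι) :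
      IntegrableOn (fun w => greenPotential L (w + (z₀ - ζ j))) (Metric.ball 0 r) := by
    simpa only [sub_neg_eq_add] using
      integrableOn_greenPotential_sub L (-(z₀ - ζ j)) Metric.isBounded_ball
  have max_ae : ∀ᵐ w : ℂ, ∑ j, greenPotential L (w + (z₀ - ζ j)) ≤ m := by
    filter_upwards [ae_all_iff.mpr fun j => ae_sub_notMem_lattice L (-(z₀ - ζ j))] with w hw
    simp only [sub_neg_eq_add, ← add_sub_assoc] at hw ⊢
    exact z₀_max (w + z₀) hw
  have submean : volume.real (Metric.ball (0 : ℂ) r) * m ≤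
      (∫ w in Metric.ball 0 r, ∑ j, greenPotential L (w + (z₀ - ζ j))) +
        Fintype.card ι * (volume.real (Metric.ball (0 : ℂ) r) * r ^ 2) := by
    rw [integral_finsetSum _ fun j _ => integrable j, Finset.mul_sum, ← nsmul_eq_mul,
      ← Finset.card_univ, ← Finset.sum_const, ← Finset.sum_add_distrib]
    exact Finset.sum_le_sum fun j _ => volume_ball_mul_greenPotential_le L (hz₀ j) r
  have key := measureReal_mul_le_of_mul_le_setIntegral
    (fun w hw => mem_ball_zero_iff.mpr ((norm_le_of_mem_fundDomain hw).trans_lt hr))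
    (measurableSet_fundDomain M) measure_ball_lt_top.ne
    (integrable_finsetSum _ fun j _ => integrable j) max_ae
    (setIntegral_fundDomain_sum_greenPotential h1 harea hLM hζ hrep z₀) submean
  have area := measureReal_fundDomain_mul_card h1 harea hLM hζ hrep
  have ball_area : volume.real (Metric.ball (0 : ℂ) r) = Real.pi * r ^ 2 := by
    have hr0 : 0 ≤ r := (add_nonneg (norm_nonneg _) (norm_nonneg _)).trans hr.le
    simp [measureReal_def, Complex.volume_ball, hr0, mul_comm]
  refine le_of_mul_le_mul_left ?_ Real.pi_div_two_pos
  calc Real.pi / 2 * m = Fintype.card ι * (volume.real (fundDomain M.ω₁ M.ω₂) * m) := by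
        rw [← area]
        ring
    _ ≤ Fintype.card ι * (Fintype.card ι * (Real.pi * r ^ 2 * r ^ 2)) := by
        rw [← ball_area]
        gcongr
    _ = Real.pi / 2 * (2 * Fintype.card ι ^ 2 * r ^ 4) := by ring

end Representatives

end MaximumArgument

section SquareRootRefinement

lemma linearIndependent_of_im_eq_zero {a b : ℂ} (ha : a.im = 0) (ha' : 0 < a.re) (hb : 0 < b.im) :
    LinearIndependent ℝ ![a, b] := by
  have basis : LinearIndependent ℝ ![(1 : ℂ), Complex.I] := by
    simpa only [Complex.coe_basisOneI] using Complex.basisOneI.linearIndependent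
  have coordinates (w : ℂ) : w.re • (1 : ℂ) + w.im • Complex.I = w := by
    simp only [Complex.real_smul, mul_one, Complex.re_add_im]
  rw [← coordinates a, ← coordinates b, LinearIndependent.pair_add_smul_add_smul_iff, ha, zero_mul]
  exact ⟨basis, (mul_pos ha' hb).ne'⟩

lemma natSqrt_sq_add_sub (R : Type*) [Semiring R] (N : ℕ) :
    (Nat.sqrt N : R) ^ 2 + (N - Nat.sqrt N ^ 2 : ℕ) = N := by
  exact_mod_cast congrArg (Nat.cast (R := R)) (Nat.add_sub_of_le (Nat.sqrt_le' N))

/-- The superlattice `Λ_N` of `Λ`, of index `N`, with its two generators. Their lengths are of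
order `1 / √N` because `⌊√N⌋ ^ 2` differs from `N` by at most `2⌊√N⌋`. -/
noncomputable def sqrtRefinement (L : PeriodPair) {N : ℕ} (hN : N ≠ 0) : PeriodPair where
  ω₁ := ((Nat.sqrt N : ℂ) * L.ω₁ + L.ω₂) / N
  ω₂ := (-((N - Nat.sqrt N ^ 2 : ℕ) : ℂ) * L.ω₁ + (Nat.sqrt N : ℂ) * L.ω₂) / N
  indep := by
    have hN' : (N : ℝ) ≠ 0 := Nat.cast_ne_zero.mpr hN
    have det_eq : (Nat.sqrt N / N : ℝ) * (Nat.sqrt N / N) -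
        (1 / N) * (-(N - Nat.sqrt N ^ 2 : ℕ) / N) = 1 / N := by
      field_simp
      linarith [natSqrt_sq_add_sub ℝ N]
    have det_ne := sub_ne_zero.mp (det_eq.trans_ne (one_div_ne_zero hN'))
    have combination (a b : ℝ) : (a * L.ω₁ + b * L.ω₂) / N = (a / N) • L.ω₁ + (b / N) • L.ω₂ := by
      simp only [Complex.real_smul]
      push_cast
      ring
    have first := combination (Nat.sqrt N) 1
    have second := combination (-(N - Nat.sqrt N ^ 2 : ℕ)) (Nat.sqrt N)
    simp only [Complex.ofReal_neg, Complex.ofReal_natCast, Complex.ofReal_one, one_mul]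
      at first second
    rw [first, second]
    exact (LinearIndependent.pair_add_smul_add_smul_iff _ _ _ _).mpr ⟨L.indep, det_ne⟩

variable (L : PeriodPair) {N : ℕ} (hN : N ≠ 0)

lemma lattice_le_lattice_sqrtRefinement : L.lattice ≤ (sqrtRefinement L hN).lattice := by
  intro w hw
  obtain ⟨m, n, rfl⟩ := PeriodPair.mem_lattice.mp hw
  have hN' : (N : ℂ) ≠ 0 := Nat.cast_ne_zero.mpr hN
  refine PeriodPair.mem_lattice.mpr
    ⟨m * Nat.sqrt N + n * (N - Nat.sqrt N ^ 2 : ℕ), -m + n * Nat.sqrt N, ?_⟩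
  simp only [sqrtRefinement]
  push_cast
  field_simp
  linear_combination (m * L.ω₁ + n * L.ω₂) * natSqrt_sq_add_sub ℂ N

lemma norm_add_norm_sqrtRefinement_lt :
    ‖(sqrtRefinement L hN).ω₁‖ + ‖(sqrtRefinement L hN).ω₂‖ <
      (3 * ‖L.ω₁‖ + 2 * ‖L.ω₂‖ + 1) / √N := by
  set s := Nat.sqrt N
  set k := N - s ^ 2
  have hN1 : (1 : ℝ) ≤ √N := Real.one_le_sqrt.mpr (mod_cast Nat.one_le_iff_ne_zero.mpr hN)
  have hs : (s : ℝ) ≤ √N := Real.nat_sqrt_le_real_sqrt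
  have hk : (k : ℝ) ≤ 2 * √N := by
    have : k ≤ 2 * s := by
      have := Nat.sqrt_le_add N
      lia
    have : (k : ℝ) ≤ 2 * s := mod_cast this
    linarith
  have first : ‖(sqrtRefinement L hN).ω₁‖ ≤ (s * ‖L.ω₁‖ + ‖L.ω₂‖) / N := by
    rw [sqrtRefinement, norm_div, Complex.norm_natCast]
    gcongr
    exact norm_add_le_of_le (by simp [s]) le_rfl
  have second : ‖(sqrtRefinement L hN).ω₂‖ ≤ (k * ‖L.ω₁‖ + s * ‖L.ω₂‖) / N := by
    rw [sqrtRefinement, norm_div, Complex.norm_natCast]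
    gcongr
    exact norm_add_le_of_le (by simp [s, k]) (by simp [s])
  calc ‖(sqrtRefinement L hN).ω₁‖ + ‖(sqrtRefinement L hN).ω₂‖
      ≤ (s * ‖L.ω₁‖ + ‖L.ω₂‖) / N + (k * ‖L.ω₁‖ + s * ‖L.ω₂‖) / N := add_le_add first second
    _ ≤ (√N * ‖L.ω₁‖ + √N * ‖L.ω₂‖ + (2 * √N * ‖L.ω₁‖ + √N * ‖L.ω₂‖)) / N := by
        rw [← add_div]
        gcongr
        exact le_mul_of_one_le_left (norm_nonneg _) hN1
    _ = (3 * ‖L.ω₁‖ + 2 * ‖L.ω₂‖) / √N := by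
        rw [div_eq_mul_one_div _ √(N : ℝ), ← Real.sqrt_div_self']
        ring
    _ < (3 * ‖L.ω₁‖ + 2 * ‖L.ω₂‖ + 1) / √N := by
        refine div_lt_div_of_pos_right (lt_add_one _) (by positivity)

end SquareRootRefinement

section ExponentialIntegral

variable {α : Type*} [MeasurableSpace α] {ν : Measure α} {F : α → ℝ} {C β : ℝ}
  (hF : Integrable F ν) (hC : ∀ᵐ x ∂ν, F x ≤ C) (hβ : 0 ≤ β)

include hC hβ in
lemma ae_exp_mul_le_rpow : ∀ᵐ x ∂ν, Real.exp (β * F x) ≤ Real.exp C ^ β := by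
  filter_upwards [hC] with x hx
  rw [← Real.exp_mul, mul_comm]
  gcongr

variable [IsFiniteMeasure ν]
include hF hC hβ

lemma integrable_exp_mul_of_ae_le : Integrable (fun x => Real.exp (β * F x)) ν := by
  refine (integrable_const (Real.exp C ^ β)).mono'
    (Real.continuous_exp.comp_aestronglyMeasurable (hF.aestronglyMeasurable.const_mul β)) ?_
  simpa only [Real.norm_of_nonneg (Real.exp_pos _).le] using ae_exp_mul_le_rpow hC hβ

lemma integral_exp_mul_le : ∫ x, Real.exp (β * F x) ∂ν ≤ ν.real Set.univ * Real.exp C ^ β := by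
  simpa only [integral_const, smul_eq_mul] using
    integral_mono_ae (integrable_exp_mul_of_ae_le hF hC hβ) (integrable_const _)
      (ae_exp_mul_le_rpow hC hβ)

lemma measureReal_univ_le_integral_exp_mul (hF0 : ∫ x, F x ∂ν = 0) :
    ν.real Set.univ ≤ ∫ x, Real.exp (β * F x) ∂ν := by
  have linear : ∫ x, (β * F x + 1) ∂ν ≤ ∫ x, Real.exp (β * F x) ∂ν :=
    integral_mono ((hF.const_mul β).add (integrable_const 1))
      (integrable_exp_mul_of_ae_le hF hC hβ) fun x => Real.add_one_le_exp (β * F x)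
  rwa [integral_add (hF.const_mul β) (integrable_const 1), integral_const_mul, hF0, mul_zero,
    zero_add, integral_const, smul_eq_mul, mul_one] at linear

end ExponentialIntegral

section TorusBounds

variable {L : PeriodPair} {ι : Type*} [Fintype ι] (ζ : ι → ℂ)

lemma sum_Utorus_ae_eq_sum_greenPotential :
    (fun z => ∑ j, Utorus L.ω₁ L.ω₂ z (ζ j)) =ᵐ[volume]
      fun z => ∑ j, greenPotential L (z - ζ j) := by
  filter_upwards [ae_all_iff.mpr fun j => ae_sub_notMem_lattice L (ζ j)] with z hz
  exact Finset.sum_congr rfl fun j _ => Utorus_eq_greenPotential_sub (hz j)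

lemma integrableOn_sum_greenPotential_sub : IntegrableOn
    (fun z => ∑ j, greenPotential L (z - ζ j)) (fundDomain L.ω₁ L.ω₂) :=
  integrable_finsetSum _ fun j _ =>
    integrableOn_greenPotential_sub L (ζ j) (isBounded_fundDomain L)

lemma integrableOn_sum_Utorus :
    IntegrableOn (fun z => ∑ j, Utorus L.ω₁ L.ω₂ z (ζ j)) (fundDomain L.ω₁ L.ω₂) :=
  (integrableOn_sum_greenPotential_sub ζ).congr
    (ae_restrict_of_ae (sum_Utorus_ae_eq_sum_greenPotential ζ).symm)

variable (h1 : L.ω₁.im = 0) (harea : L.ω₁.re * L.ω₂.im = Real.pi / 2)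
include h1 harea

lemma setIntegral_sum_Utorus :
    ∫ z in fundDomain L.ω₁ L.ω₂, ∑ j, Utorus L.ω₁ L.ω₂ z (ζ j) = 0 := by
  have : Countable L.lattice.toAddSubgroup := inferInstanceAs (Countable L.lattice)
  rw [integral_congr_ae (ae_restrict_of_ae (sum_Utorus_ae_eq_sum_greenPotential ζ)),
    integral_finsetSum _ fun j _ =>
      integrableOn_greenPotential_sub L (ζ j) (isBounded_fundDomain L)]
  refine Finset.sum_eq_zero fun j _ => ?_
  simp only [sub_eq_add_neg]
  rw [setIntegral_comp_add_right_of_invariant (isAddFundamentalDomain_fundDomain L)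
    (greenPotential_vadd h1 harea), setIntegral_greenPotential h1 harea]

lemma ae_sum_Utorus_le {N : ℕ} {hN : N ≠ 0} {ζ : Fin N → ℂ}
    (hζ : ∀ j, ζ j ∈ (sqrtRefinement L hN).lattice)
    (hrep : ∀ x ∈ (sqrtRefinement L hN).lattice, ∃! j, x - ζ j ∈ L.lattice) :
    ∀ᵐ z : ℂ, ∑ j, Utorus L.ω₁ L.ω₂ z (ζ j) ≤ 2 * (3 * ‖L.ω₁‖ + 2 * ‖L.ω₂‖ + 1) ^ 4 := by
  filter_upwards [sum_Utorus_ae_eq_sum_greenPotential ζ,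
    ae_all_iff.mpr fun j => ae_sub_notMem_lattice L (ζ j)] with z hsum hz
  have bound := sum_greenPotential_sub_le h1 harea (lattice_le_lattice_sqrtRefinement L hN) hζ hrep
    (norm_add_norm_sqrtRefinement_lt L hN) hz
  have hN' : (N : ℝ) ≠ 0 := Nat.cast_ne_zero.mpr hN
  have sqrt_pow : √(N : ℝ) ^ 4 = (N : ℝ) ^ 2 := by
    rw [pow_mul _ 2 2, Real.sq_sqrt (Nat.cast_nonneg _)]
  rw [hsum]
  rwa [Fintype.card_fin, div_pow, sqrt_pow, mul_div_assoc', mul_right_comm,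
    mul_div_cancel_right₀ _ (pow_ne_zero 2 hN')] at bound

end TorusBounds

/-- uniform bounds for the exponential of the sum of the torus
Green function over a complete set of representatives of `Λ_N/Λ`. -/
theorem torus_lattice_points_bounds (ω₁ ω₂ : ℂ)
    (h1 : ω₁.im = 0) (h1' : 0 < ω₁.re) (h2 : 0 < ω₂.im)
    (harea : ω₁.re * ω₂.im = Real.pi / 2) :
    ∃ K : ℝ, 1 < K ∧
      ∀ N : ℕ, 1 ≤ N →
      ∀ ζ : Fin N → ℂ,
        (∀ j, ζ j ∈ latticeSet (((Nat.sqrt N : ℂ) * ω₁ + ω₂) / (N : ℂ))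
          ((-(((N - Nat.sqrt N ^ 2 : ℕ) : ℂ)) * ω₁ + (Nat.sqrt N : ℂ) * ω₂) / (N : ℂ))) →
        (∀ x ∈ latticeSet (((Nat.sqrt N : ℂ) * ω₁ + ω₂) / (N : ℂ))
            ((-(((N - Nat.sqrt N ^ 2 : ℕ) : ℂ)) * ω₁ + (Nat.sqrt N : ℂ) * ω₂) / (N : ℂ)),
          ∃! j : Fin N, x - ζ j ∈ latticeSet ω₁ ω₂) →
      ∀ β : ℝ, 0 ≤ β →
        1 ≤ 2 / Real.pi *
            ∫ z in fundDomain ω₁ ω₂, Real.exp (β * ∑ j, Utorus ω₁ ω₂ z (ζ j)) ∧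
        2 / Real.pi *
            ∫ z in fundDomain ω₁ ω₂, Real.exp (β * ∑ j, Utorus ω₁ ω₂ z (ζ j)) ≤
          K ^ β := by
  let L : PeriodPair := ⟨ω₁, ω₂, linearIndependent_of_im_eq_zero h1 h1' h2⟩
  refine ⟨Real.exp (2 * (3 * ‖ω₁‖ + 2 * ‖ω₂‖ + 1) ^ 4), Real.one_lt_exp_iff.mpr (by positivity),
    fun N hN ζ hζ hrep β hβ => ?_⟩
  let M := sqrtRefinement L (Nat.one_le_iff_ne_zero.mp hN)
  have hζM : ∀ j, ζ j ∈ M.lattice := fun j => (latticeSet_eq_lattice M).subset (hζ j)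
  have hrepL : ∀ x ∈ M.lattice, ∃! j, x - ζ j ∈ L.lattice := by
    simp only [← SetLike.mem_coe, ← latticeSet_eq_lattice]
    exact hrep
  have volume_eq : (volume.restrict (fundDomain ω₁ ω₂)).real Set.univ = Real.pi / 2 := by
    rw [measureReal_restrict_apply_univ, measureReal_fundDomain_eq_pi_div_two (L := L) h1 harea]
  have : Fact (volume (fundDomain ω₁ ω₂) < ⊤) := ⟨(isBounded_fundDomain L).measure_lt_top⟩
  have integrable := integrableOn_sum_Utorus (L := L) ζ
  have upper := ae_restrict_of_ae (s := fundDomain ω₁ ω₂) (ae_sum_Utorus_le h1 harea hζM hrepL)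
  rw [← inv_div, le_inv_mul_iff₀ Real.pi_div_two_pos, inv_mul_le_iff₀ Real.pi_div_two_pos, mul_one,
    ← volume_eq]
  exact ⟨measureReal_univ_le_integral_exp_mul integrable upper hβ
    (setIntegral_sum_Utorus (L := L) ζ h1 harea), integral_exp_mul_le integrable upper hβ⟩
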